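/- arXiv:1004.5146 — 3 statements merged into one kernel-verified Lean document; each statement's English description precedes it below -/
import Mathlib

section
/- Let $1<\alpha<2$, $n\geq 2$, and let $B\subset\mathbb{R}^n$ be the open unit ball. Let $w(x)=(1-|x|^2)^{(\alpha-1)/2}$ for $x\in B$. There exists a constant $c_3=c_3(\alpha,n)>0$ such that for every continuous function $u$ with compact support in $B$: $\mathcal{E}_B(u) \geq \frac{1}{2}\int_B\int_B\left(\frac{u(x)}{w(x)}-\frac{u(y)}{w(y)}\right)^2\frac{w(x)w(y)}{|x-y|^{n+\alpha}}\,dx\,dy + 2^{\alpha}\kappa_{n,\alpha}\int_B u^2(x)(1-|x|^2)^{-\alpha}\,dx + c_3\int_B u^2(x)(1-|x|^2)^{-\alpha+1}\,dx$. -/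
open MeasureTheory Metric Set Filter
open scoped ENNReal Topology

/-- The Euler beta function. -/
noncomputable def eulerBeta (a b : ℝ) : ℝ :=
  Real.Gamma a * Real.Gamma b / Real.Gamma (a + b)

/-- The sharp fractional Hardy constant `κ_{n,α}`. -/
noncomputable def kappa (n : ℕ) (α : ℝ) : ℝ :=
  Real.pi ^ (((n : ℝ) - 1) / 2) * (Real.Gamma ((1 + α) / 2) / Real.Gamma ((n + α) / 2)) *
    ((eulerBeta ((1 + α) / 2) ((2 - α) / 2) - 2 ^ α) / (α * 2 ^ α))

/-- The quadratic form `𝓔_D(u)`, valued in `[0,∞]`. -/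
noncomputable def energy (n : ℕ) (α : ℝ) (D : Set (EuclideanSpace ℝ (Fin n)))
    (u : EuclideanSpace ℝ (Fin n) → ℝ) : ℝ≥0∞ :=
  (1 / 2 : ℝ≥0∞) * ∫⁻ x in D, ∫⁻ y in D,
    ENNReal.ofReal ((u x - u y) ^ 2 / ‖x - y‖ ^ ((n : ℝ) + α))

/-- The weight `w(x) = (1 - |x|²)^{(α-1)/2}` on the unit ball. -/
noncomputable def w (n : ℕ) (α : ℝ) (x : EuclideanSpace ℝ (Fin n)) : ℝ :=
  (1 - ‖x‖ ^ 2) ^ ((α - 1) / 2)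

theorem two_rpow_le_beta {α : ℝ} (h1 : 1 < α) (h2 : α < 2) :
    (2:ℝ) ^ α ≤ eulerBeta ((1 + α) / 2) ((2 - α) / 2) := by
  obtain ⟨a, rfl⟩ : ∃ a, α = 2 * a + 1 := ⟨(α - 1) / 2, by ring⟩
  have ha : 0 < a := by linarith
  have ha' : a < 1 / 2 := by linarith
  have e1 : (1 + (2 * a + 1)) / 2 = 1 + a := by ring
  have e2 : (2 - (2 * a + 1)) / 2 = 1 / 2 - a := by ring
  unfold eulerBeta
  rw [e1, e2]
  have hG1 : 0 < Real.Gamma (1 + a) := Real.Gamma_pos_of_pos (by linarith)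
  have hG2 : 0 < Real.Gamma (1 - 2 * a) := Real.Gamma_pos_of_pos (by linarith)
  have hG3 : 0 < Real.Gamma (1 - a) := Real.Gamma_pos_of_pos (by linarith)
  have k1 := Real.Gamma_mul_add_mul_le_rpow_Gamma_mul_rpow_Gamma (s := 1 + a) (t := 1 - 2 * a)
    (a := 1 / 3) (b := 2 / 3) (by linarith) (by linarith) (by norm_num) (by norm_num) (by norm_num)
  have k2 := Real.Gamma_mul_add_mul_le_rpow_Gamma_mul_rpow_Gamma (s := 1 + a) (t := 1 - 2 * a)
    (a := 2 / 3) (b := 1 / 3) (by linarith) (by linarith) (by norm_num) (by norm_num) (by norm_num)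
  have e3 : 1 / 3 * (1 + a) + 2 / 3 * (1 - 2 * a) = 1 - a := by ring
  have e4 : 2 / 3 * (1 + a) + 1 / 3 * (1 - 2 * a) = 1 := by ring
  rw [e3] at k1
  rw [e4, Real.Gamma_one] at k2
  have k3 : Real.Gamma (1 - a) ≤ Real.Gamma (1 + a) * Real.Gamma (1 - 2 * a) := by
    have := mul_le_mul k1 k2 (by norm_num) (by positivity)
    calc Real.Gamma (1 - a) = Real.Gamma (1 - a) * 1 := by ring
      _ ≤ _ := this
      _ = (Real.Gamma (1 + a) ^ (1/3:ℝ) * Real.Gamma (1 + a) ^ (2/3:ℝ)) *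
        (Real.Gamma (1 - 2 * a) ^ (2/3:ℝ) * Real.Gamma (1 - 2 * a) ^ (1/3:ℝ)) := by ring
      _ = _ := by
        rw [← Real.rpow_add hG1, ← Real.rpow_add hG2]; norm_num
  have dup := Real.Gamma_mul_Gamma_add_half (1 / 2 - a)
  have e5 : (1 / 2 - a + 1 / 2) = 1 - a := by ring
  have e6 : 2 * (1 / 2 - a) = 1 - 2 * a := by ring
  have e7 : 1 - (1 - 2 * a) = 2 * a := by ring
  rw [e5, e6, e7] at dup
  have e8 : (1 + a + (1 / 2 - a)) = 1 / 2 + 1 := by ring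
  rw [e8, Real.Gamma_add_one (by norm_num), Real.Gamma_one_half_eq]
  have hpi : 0 < √Real.pi := by positivity
  rw [le_div_iff₀ (by positivity), Real.rpow_add (by norm_num), Real.rpow_one]
  have h2a : 0 < (2:ℝ) ^ (2 * a) := by positivity
  have : (2:ℝ) ^ (2 * a) * √Real.pi * Real.Gamma (1 - a) ≤ 
    Real.Gamma (1 + a) * Real.Gamma (1 / 2 - a) * Real.Gamma (1 - a) := by
    calc _ ≤ (2:ℝ) ^ (2 * a) * √Real.pi * (Real.Gamma (1 + a) * Real.Gamma (1 - 2 * a)) := by gcongr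
      _ = Real.Gamma (1 + a) * (Real.Gamma (1 - 2 * a) * (2:ℝ) ^ (2 * a) * √Real.pi) := by ring
      _ = _ := by rw [← dup]; ring
  have := le_of_mul_le_mul_right this hG3
  linarith

theorem conv_pow_le {α R τ : ℝ} (h1 : 1 < α) (h2 : α < 2) (hR : 0 < R) (hτ : |τ| < R) :
    (R + τ) ^ α + (R - τ) ^ α ≤ 2 ^ α * R ^ α - (2 ^ α - 2) / 2 * (R ^ (α - 2) * (R ^ 2 - τ ^ 2)) := by
  wlog h0 : 0 ≤ τ generalizing τ
  · have := this (τ := -τ) (by simpa using hτ) (by linarith)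
    simp only [sub_neg_eq_add, neg_sq, ← sub_eq_add_neg] at this
    linarith
  rw [abs_of_nonneg h0] at hτ
  obtain ⟨t, rfl⟩ : ∃ t, τ = R * t := ⟨τ / R, by field_simp⟩
  have ht0 : 0 ≤ t := by by_contra h; push Not at h; nlinarith
  have ht1 : t < 1 := by by_contra h; push Not at h; nlinarith
  have e1 : R + R * t = R * (1 + t) := by ring
  have e2 : R - R * t = R * (1 - t) := by ring
  have e3 : R ^ (α - 2) * (R ^ 2 - (R * t) ^ 2) = R ^ α * (1 - t ^ 2) := by
    rw [Real.rpow_sub hR]; norm_num; field_simp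
  rw [e1, e2, e3, Real.mul_rpow hR.le (by linarith), Real.mul_rpow hR.le (by linarith)]
  have hc := convexOn_rpow h1.le
  have c1 := hc.2 (x := 1) (y := 2) (by simp) (by simp) (show 0 ≤ 1 - t by linarith) ht0 (by ring)
  have c2 := hc.2 (x := 1) (y := 0) (by simp) (by simp) (show 0 ≤ 1 - t by linarith) ht0 (by ring)
  simp only [smul_eq_mul, Real.one_rpow, Real.zero_rpow (show α ≠ 0 by linarith)] at c1 c2
  have e4 : (1 - t) * 1 + t * 2 = 1 + t := by ring
  have e5 : (1 - t) * 1 + t * 0 = 1 - t := by ring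
  rw [e4] at c1
  rw [e5] at c2
  have hRa : 0 < R ^ α := by positivity
  have h2' : (2:ℝ) < 2 ^ α := by
    calc (2:ℝ) = 2 ^ (1:ℝ) := by simp
      _ < _ := Real.rpow_lt_rpow_of_exponent_lt (by norm_num) h1
  have : (1 + t) ^ α + (1 - t) ^ α ≤ 2 ^ α - (2 ^ α - 2) / 2 * (1 - t ^ 2) := by
    nlinarith [mul_nonneg (sub_nonneg.2 h2'.le) (sq_nonneg (1 - t))]
  nlinarith

theorem conv_pow_ge {α A τ : ℝ} (h1 : 1 < α) (hτ : |τ| ≤ A) :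
    2 * A ^ α ≤ (A + τ) ^ α + (A - τ) ^ α := by
  have hc := convexOn_rpow h1.le
  have := abs_le.1 hτ
  have c1 := hc.2 (x := A + τ) (y := A - τ) (by simp; linarith) (by simp; linarith)
    (show (0:ℝ) ≤ 1/2 by norm_num) (show (0:ℝ) ≤ 1/2 by norm_num) (by norm_num)
  simp only [smul_eq_mul] at c1
  have e : 1 / 2 * (A + τ) + 1 / 2 * (A - τ) = A := by ring
  rw [e] at c1
  linarith
theorem beta_int {a b : ℝ} (ha : 0 < a) (hb : 0 < b) :
    IntegrableOn (fun x : ℝ => x ^ (a - 1) * (1 - x) ^ (b - 1)) (Ioo 0 1) ∧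
    ∫ x in Ioo (0:ℝ) 1, x ^ (a - 1) * (1 - x) ^ (b - 1) = eulerBeta a b := by
  have hB : 0 < ProbabilityTheory.beta a b := ProbabilityTheory.beta_pos ha hb
  have h1 := ProbabilityTheory.lintegral_betaPDF_eq_one ha hb
  rw [ProbabilityTheory.lintegral_betaPDF] at h1
  have hnn : 0 ≤ᵐ[volume.restrict (Ioo (0:ℝ) 1)]
      fun x : ℝ => 1 / ProbabilityTheory.beta a b * x ^ (a - 1) * (1 - x) ^ (b - 1) := by
    refine ae_restrict_of_forall_mem measurableSet_Ioo (fun x hx ↦ ?_)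
    have := hx.1
    have : 0 < 1 - x := by linarith [hx.2]
    simp only [Pi.zero_apply]
    positivity
  have hm : AEStronglyMeasurable
      (fun x : ℝ => 1 / ProbabilityTheory.beta a b * x ^ (a - 1) * (1 - x) ^ (b - 1))
      (volume.restrict (Ioo (0:ℝ) 1)) := Measurable.aestronglyMeasurable (by fun_prop)
  have hi : IntegrableOn
      (fun x : ℝ => 1 / ProbabilityTheory.beta a b * x ^ (a - 1) * (1 - x) ^ (b - 1)) (Ioo 0 1) := by
    rw [IntegrableOn, ← lintegral_ofReal_ne_top_iff_integrable hm hnn, h1]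
    simp
  have hv := integral_eq_lintegral_of_nonneg_ae hnn hm
  rw [h1] at hv
  simp_rw [mul_assoc] at hi hv
  constructor
  · have := hi.const_mul (ProbabilityTheory.beta a b)
    refine this.congr (Eventually.of_forall fun x => ?_)
    simp only
    field_simp
  · rw [integral_const_mul] at hv
    simp at hv
    rw [inv_mul_eq_one₀ hB.ne'] at hv
    exact hv.symm

theorem beta_int2 {α : ℝ} (h1 : 1 < α) (h2 : α < 2) :
    IntegrableOn (fun z : ℝ => z ^ (1 - α) * (1 - z ^ 2) ^ ((α - 1) / 2 - 1)) (Ioo 0 1) ∧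
    2 * (α - 1) * ∫ z in Ioo (0:ℝ) 1, z ^ (1 - α) * (1 - z ^ 2) ^ ((α - 1) / 2 - 1) =
      eulerBeta ((1 + α) / 2) ((2 - α) / 2) := by
  obtain ⟨hi, hv⟩ := beta_int (a := 1 - α / 2) (b := (α - 1) / 2) (by linarith) (by linarith)
  have him : (fun z : ℝ => z ^ 2) '' Ioo 0 1 = Ioo 0 1 := by
    ext y
    constructor
    · rintro ⟨z, hz, rfl⟩
      exact ⟨pow_pos hz.1 2, by simp only; nlinarith [hz.1, hz.2]⟩
    · intro hy
      refine ⟨√y, ⟨Real.sqrt_pos.2 hy.1, ?_⟩, Real.sq_sqrt hy.1.le⟩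
      rw [Real.sqrt_lt' one_pos]; simpa using hy.2
  have hd : ∀ z ∈ Ioo (0:ℝ) 1, HasDerivWithinAt (fun z : ℝ => z ^ 2) (2 * z) (Ioo 0 1) z := by
    intro z _
    simpa using (hasDerivAt_pow 2 z).hasDerivWithinAt
  have hinj : InjOn (fun z : ℝ => z ^ 2) (Ioo 0 1) := by
    intro x hx y hy h
    simp only at h
    nlinarith [hx.1, hy.1]
  have hcongr : EqOn (fun z : ℝ => |2 * z| • ((z ^ 2) ^ (1 - α / 2 - 1) * (1 - z ^ 2) ^ ((α - 1) / 2 - 1)))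
     (fun z : ℝ => 2 * (z ^ (1 - α) * (1 - z ^ 2) ^ ((α - 1) / 2 - 1))) (Ioo 0 1) := by
    intro z hz
    have hz0 := hz.1
    simp only [smul_eq_mul]
    rw [abs_of_pos (by linarith), ← Real.rpow_natCast z 2, ← Real.rpow_mul hz0.le,
      show (1 - α) = 1 + (((2:ℕ):ℝ) * (1 - α / 2 - 1)) by push_cast; ring, Real.rpow_add hz0, Real.rpow_one]
    ring
  rw [← him, integrableOn_image_iff_integrableOn_abs_deriv_smul measurableSet_Ioo hd hinj,
    integrableOn_congr_fun hcongr measurableSet_Ioo] at hi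
  rw [← him, integral_image_eq_integral_abs_deriv_smul measurableSet_Ioo hd hinj,
    setIntegral_congr_fun measurableSet_Ioo hcongr, integral_const_mul] at hv
  constructor
  · have := hi.const_mul (1/2)
    refine this.congr (Eventually.of_forall fun x => ?_)
    simp only
    ring
  · have e : eulerBeta ((1 + α) / 2) ((2 - α) / 2) = (α - 1) * eulerBeta (1 - α / 2) ((α - 1) / 2) := by
      unfold eulerBeta
      rw [show (1 + α) / 2 + (2 - α) / 2 = 1 / 2 + 1 by ring, Real.Gamma_add_one (by norm_num),
        show (1 - α / 2 + (α - 1) / 2) = 1 / 2 by ring, show (1 + α) / 2 = (α - 1) / 2 + 1 by ring,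
        Real.Gamma_add_one (by linarith), show (2 - α) / 2 = 1 - α / 2 by ring]
      have := Real.Gamma_pos_of_pos (show (0:ℝ) < 1 / 2 by norm_num)
      field_simp
    rw [e, ← hv]; ring

/-- truncated integral -/
noncomputable def Ieps (α ε : ℝ) : ℝ :=
  ∫ z in ε..1, (1 - z ^ 2) ^ ((α - 1) / 2) * z ^ (-1 - α)

noncomputable def deltaEps (α ε : ℝ) : ℝ :=
  2 * (α - 1) * ∫ z in (0:ℝ)..ε, z ^ (1 - α) * (1 - z ^ 2) ^ ((α - 1) / 2 - 1)

theorem beta_intervalIntegrable {α : ℝ} (h1 : 1 < α) (h2 : α < 2) :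
    IntervalIntegrable (fun z : ℝ => z ^ (1 - α) * (1 - z ^ 2) ^ ((α - 1) / 2 - 1)) volume 0 1 := by
  rw [intervalIntegrable_iff_integrableOn_Ioo_of_le zero_le_one]
  exact (beta_int2 h1 h2).1

theorem Ieps_cont {α ε : ℝ} (h1 : 1 < α) (hε : 0 < ε) :
    ContinuousOn (fun z : ℝ => (1 - z ^ 2) ^ ((α - 1) / 2) * z ^ (-1 - α)) (Icc ε 1) := by
  apply ContinuousOn.mul
  · apply ContinuousOn.rpow_const (by fun_prop)
    intro x hx; right; linarith
  · apply ContinuousOn.rpow_const (by fun_prop)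
    intro x hx; left; linarith [hx.1]

theorem Ieps_bound {α ε : ℝ} (h1 : 1 < α) (h2 : α < 2) (hε : 0 < ε) (hε1 : ε < 1) :
    eulerBeta ((1 + α) / 2) ((2 - α) / 2) - deltaEps α ε ≤ 2 * ε ^ (-α) - 2 * α * Ieps α ε := by
  have hI := beta_intervalIntegrable h1 h2
  have hI2 : IntervalIntegrable (fun z : ℝ => z ^ (1 - α) * (1 - z ^ 2) ^ ((α - 1) / 2 - 1)) volume ε 1 :=
    hI.mono_set (by rw [uIcc_of_le hε1.le, uIcc_of_le zero_le_one]; exact Icc_subset_Icc_left hε.le)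
  have hI1 : IntervalIntegrable (fun z : ℝ => z ^ (1 - α) * (1 - z ^ 2) ^ ((α - 1) / 2 - 1)) volume 0 ε :=
    hI.mono_set (by rw [uIcc_of_le hε.le, uIcc_of_le zero_le_one]; exact Icc_subset_Icc_right hε1.le)
  have hsum := intervalIntegral.integral_add_adjacent_intervals hI1 hI2
  have hv := (beta_int2 h1 h2).2
  rw [← integral_Ioc_eq_integral_Ioo, ← intervalIntegral.integral_of_le zero_le_one, ← hsum] at hv
  have hc : IntervalIntegrable (fun z : ℝ => (1 - z ^ 2) ^ ((α - 1) / 2) * z ^ (-1 - α)) volume ε 1 :=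
    ContinuousOn.intervalIntegrable (by rw [uIcc_of_le hε1.le]; exact Ieps_cont h1 hε)
  have ftc := intervalIntegral.integral_eq_sub_of_hasDerivAt_of_le (a := ε) (b := 1) hε1.le
    (f := fun z : ℝ => z ^ (-α) * (1 - z ^ 2) ^ ((α - 1) / 2))
    (f' := fun z : ℝ => -α * ((1 - z ^ 2) ^ ((α - 1) / 2) * z ^ (-1 - α)) -
      (α - 1) * (z ^ (1 - α) * (1 - z ^ 2) ^ ((α - 1) / 2 - 1)))
    (by
      apply ContinuousOn.mul
      · apply ContinuousOn.rpow_const (by fun_prop)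
        intro x hx; left; linarith [hx.1]
      · apply ContinuousOn.rpow_const (by fun_prop)
        intro x hx; right; linarith)
    (by
      intro z hz
      have hz0 : 0 < z := hε.trans hz.1
      have hz1 : 0 < 1 - z ^ 2 := by nlinarith [hz.2]
      have d1 := Real.hasDerivAt_rpow_const (x := z) (p := -α) (Or.inl hz0.ne')
      have d2 := ((hasDerivAt_pow 2 z).const_sub 1).rpow_const (p := (α - 1) / 2) (Or.inl hz1.ne')
      refine (d1.mul d2).congr_deriv ?_
      rw [show (-1 - α) = -α - 1 by ring, show (1 - α) = 1 + -α by ring, Real.rpow_add hz0,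
        Real.rpow_one]
      push_cast; ring)
    ((hc.const_mul _).sub (hI2.const_mul _))
  rw [intervalIntegral.integral_sub (hc.const_mul _) (hI2.const_mul _),
    intervalIntegral.integral_const_mul, intervalIntegral.integral_const_mul] at ftc
  simp only [Real.one_rpow, one_pow, sub_self, Real.zero_rpow (show (α - 1) / 2 ≠ 0 by linarith)] at ftc
  have hle : ε ^ (-α) * (1 - ε ^ 2) ^ ((α - 1) / 2) ≤ ε ^ (-α) := by
    apply mul_le_of_le_one_right (by positivity)
    apply Real.rpow_le_one <;> nlinarith
  unfold deltaEps Ieps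
  linarith

theorem deltaEps_tendsto {α : ℝ} (h1 : 1 < α) (h2 : α < 2) :
    Tendsto (fun k : ℕ => deltaEps α (1 / ((k:ℝ) + 2))) atTop (𝓝 0) := by
  have hI := beta_intervalIntegrable h1 h2
  have hc := intervalIntegral.continuousOn_primitive_interval' hI (a := 0) (by simp)
  have h0 := hc 0 (by simp)
  have ht : Tendsto (fun k : ℕ => 1 / ((k:ℝ) + 2)) atTop (𝓝[uIcc 0 1] 0) := by
    apply tendsto_nhdsWithin_iff.2
    constructor
    · have := tendsto_one_div_add_atTop_nhds_zero_nat (𝕜 := ℝ)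
      have := (tendsto_add_atTop_iff_nat 1).2 this
      refine this.congr fun k => ?_
      push_cast; congr 1; ring
    · refine Eventually.of_forall fun k => ?_
      rw [uIcc_of_le zero_le_one]
      refine ⟨by positivity, ?_⟩
      rw [div_le_one (by positivity)]
      have : (0:ℝ) ≤ k := by positivity
      linarith
  have := (h0.tendsto.comp ht).const_mul (2 * (α - 1))
  simpa [deltaEps, Function.comp_def] using this

theorem deltaEps_nonneg {α ε : ℝ} (h1 : 1 < α) (hε : 0 < ε) (hε1 : ε < 1) : 0 ≤ deltaEps α ε := by
  unfold deltaEps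
  apply mul_nonneg (by linarith)
  apply intervalIntegral.integral_nonneg hε.le
  intro u hu
  have : 0 ≤ 1 - u ^ 2 := by nlinarith [hu.1, hu.2]
  have := hu.1
  positivity

theorem Ieps_nonneg {α ε : ℝ} (hε : 0 < ε) (hε1 : ε < 1) : 0 ≤ Ieps α ε := by
  unfold Ieps
  apply intervalIntegral.integral_nonneg hε1.le
  intro u hu
  have : 0 ≤ 1 - u ^ 2 := by nlinarith [hu.1, hu.2]
  have : 0 ≤ u := hε.le.trans hu.1
  positivity

theorem m1_ftc {α ε R τ : ℝ} (h1 : 1 < α) (hε : 0 < ε) (hε1 : ε < 1) (hτ : |τ| < R) :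
    ∫ z in ε..1, R * (R + τ * z) ^ (α - 1) * z ^ (-1 - α) =
      (1 / α) * ((R / ε + τ) ^ α - (R + τ) ^ α) := by
  have hR : 0 < R := (abs_nonneg _).trans_lt hτ
  have hpos : ∀ z ∈ Icc ε 1, 0 < R + τ * z := by
    intro z hz
    have hz0 := hε.trans_le hz.1
    have := abs_lt.1 hτ
    nlinarith [hz.2]
  have ftc := intervalIntegral.integral_eq_sub_of_hasDerivAt_of_le (a := ε) (b := 1) hε1.le
    (f := fun z : ℝ => -(1 / α) * (R / z + τ) ^ α)
    (f' := fun z : ℝ => R * (R + τ * z) ^ (α - 1) * z ^ (-1 - α))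
    (by
      apply ContinuousOn.mul (by fun_prop)
      apply ContinuousOn.rpow_const
      · apply ContinuousOn.add _ (by fun_prop)
        exact ContinuousOn.div (by fun_prop) (by fun_prop) (fun x hx => (hε.trans_le hx.1).ne')
      · intro x hx; right; linarith)
    (by
      intro z hz
      have hz0 : 0 < z := hε.trans hz.1
      have hp := hpos z ⟨hz.1.le, hz.2.le⟩
      have e : R / z + τ = (R + τ * z) / z := by field_simp
      have hq : 0 < R / z + τ := by rw [e]; positivity
      have d := (((((hasDerivAt_id z).inv hz0.ne').const_mul R).add_const τ).rpow_const (p := α)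
        (Or.inl (by simpa [div_eq_mul_inv] using hq.ne'))).const_mul (-(1/α))
      refine d.congr_deriv ?_
      simp only [id, Pi.inv_apply]
      rw [← div_eq_mul_inv, e, Real.div_rpow hp.le hz0.le, show (-1 - α) = -(α - 1) - 2 by ring,
        Real.rpow_sub hz0 (-(α - 1)) 2, Real.rpow_neg hz0.le]
      norm_num
      field_simp)
    (by
      apply ContinuousOn.intervalIntegrable
      rw [uIcc_of_le hε1.le]
      apply ContinuousOn.mul
      · apply ContinuousOn.mul (by fun_prop)
        apply ContinuousOn.rpow_const (by fun_prop)
        intro x hx; right; linarith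
      · apply ContinuousOn.rpow_const (by fun_prop)
        intro x hx; left; linarith [hx.1])
  rw [ftc]
  simp only [div_one]
  ring

theorem alg1 {D R τ z P : ℝ} (hP : P ≠ 0) (hPe : P = R + τ * z) (hRD : R ^ 2 = D + τ ^ 2) :
    D - 2 * (D * z / P) * τ - (D * z / P) ^ 2 = D * (R / P) ^ 2 * (1 - z ^ 2) := by
  have hD : D = R ^ 2 - τ ^ 2 := by linarith
  have : D * P ^ 2 - 2 * (D * z) * τ * P - (D * z) ^ 2 = D * R ^ 2 * (1 - z ^ 2) := by
    rw [hPe, hD]; ring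
  calc _ = (D * P ^ 2 - 2 * (D * z) * τ * P - (D * z) ^ 2) / P ^ 2 := by field_simp
    _ = _ := by rw [this]; field_simp

theorem alg2 {D R τ z P : ℝ} (hP : P ≠ 0) (hPe : P = R + τ * z) :
    D - (D * z / P) * τ = D * R / P := by
  have : D * P - D * z * τ = D * R := by rw [hPe]; ring
  calc _ = (D * P - D * z * τ) / P := by field_simp
    _ = _ := by rw [this]

theorem alg3 {D R τ ρ P : ℝ} (hP : P ≠ 0) (hPe : P = D - ρ * τ) :
    R + τ * (R * ρ / P) = R * D / P := by
  have : R * P + τ * R * ρ = R * D := by rw [hPe]; ring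
  calc _ = (R * P + τ * R * ρ) / P := by field_simp
    _ = _ := by rw [this]

/-- set of admissible radii on a half line -/
def radSet (D τ ε : ℝ) : Set ℝ :=
  {ρ | 0 < ρ ∧ 0 < D - 2 * ρ * τ - ρ ^ 2 ∧
    D * (D - 2 * ρ * τ - ρ ^ 2) < (1 - ε ^ 2) * (D - ρ * τ) ^ 2}

theorem radSet_eq {D R τ ε : ℝ} (hD : 0 < D) (hR : 0 < R) (hRD : R ^ 2 = D + τ ^ 2)
    (hε : 0 < ε) (hε1 : ε < 1) :
    radSet D τ ε = (fun z => D * z / (R + τ * z)) '' Ioo ε 1 := by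
  have hτ : |τ| < R := abs_lt_of_sq_lt_sq (by linarith) hR.le
  have hτ' := abs_lt.1 hτ
  ext ρ
  constructor
  · rintro ⟨h0, h1, h2⟩
    have hpos : 0 < D - ρ * τ := by nlinarith [sq_nonneg ρ]
    have hpos' := hpos.ne'
    refine ⟨R * ρ / (D - ρ * τ), ⟨?_, ?_⟩, ?_⟩
    · rw [lt_div_iff₀ hpos]
      apply lt_of_pow_lt_pow_left₀ 2 (by positivity)
      nlinarith
    · rw [div_lt_one hpos]
      apply lt_of_pow_lt_pow_left₀ 2 hpos.le
      nlinarith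
    · have : R + τ * (R * ρ / (D - ρ * τ)) = R * D / (D - ρ * τ) :=
        alg3 hpos' rfl
      simp only
      rw [this]
      field_simp
  · rintro ⟨z, ⟨hz1, hz2⟩, rfl⟩
    have hz0 : 0 < z := hε.trans hz1
    have hp : 0 < R + τ * z := by nlinarith
    have hp' := hp.ne'
    have e1 : D - 2 * (D * z / (R + τ * z)) * τ - (D * z / (R + τ * z)) ^ 2
        = D * (R / (R + τ * z)) ^ 2 * (1 - z ^ 2) := alg1 hp' rfl hRD
    have e2 : D - (D * z / (R + τ * z)) * τ = D * R / (R + τ * z) := alg2 hp' rfl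
    have hz3 : 0 < 1 - z ^ 2 := by nlinarith
    refine ⟨by positivity, ?_, ?_⟩
    · simp only [e1]; positivity
    · simp only [e1, e2]
      have : 1 - z ^ 2 < 1 - ε ^ 2 := by nlinarith
      calc _ = (1 - z ^ 2) * (D * R / (R + τ * z)) ^ 2 := by field_simp
        _ < _ := by gcongr

theorem half_cov {D R τ ε : ℝ} (hD : 0 < D) (hR : 0 < R) (hRD : R ^ 2 = D + τ ^ 2)
    (hε : 0 < ε) (hε1 : ε < 1) (g : ℝ → ℝ≥0∞) :
    ∫⁻ ρ in radSet D τ ε, g ρ =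
      ∫⁻ z in Ioo ε 1, ENNReal.ofReal (D * R / (R + τ * z) ^ 2) * g (D * z / (R + τ * z)) := by
  have hτ : |τ| < R := abs_lt_of_sq_lt_sq (by linarith) hR.le
  have hτ' := abs_lt.1 hτ
  have hp : ∀ z ∈ Ioo ε 1, 0 < R + τ * z := by
    intro z hz
    have := hε.trans hz.1
    nlinarith [hz.2]
  rw [radSet_eq hD hR hRD hε hε1, lintegral_image_eq_lintegral_abs_deriv_mul measurableSet_Ioo
    (f' := fun z => D * R / (R + τ * z) ^ 2)]
  · apply setLIntegral_congr_fun measurableSet_Ioo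
    intro z hz
    have := hp z hz
    simp only
    rw [abs_of_pos (by positivity)]
  · intro z hz
    have := hp z hz
    have d1 := (hasDerivAt_id z).const_mul D
    have d2 := ((hasDerivAt_id z).const_mul τ).const_add R
    refine ((d1.div d2 this.ne').congr_deriv ?_).hasDerivWithinAt
    simp only [id]
    congr 1
    ring
  · intro x hx y hy h
    have h1 := hp x hx
    have h2 := hp y hy
    simp only at h
    rw [div_eq_div_iff h1.ne' h2.ne'] at h
    have : D * R * (x - y) = 0 := by linarith
    have := (mul_eq_zero.1 this).resolve_left (by positivity)
    linarith

theorem m1_eq {α D R τ ε : ℝ} (h1 : 1 < α) (hD : 0 < D) (hR : 0 < R) (hRD : R ^ 2 = D + τ ^ 2)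
    (hε : 0 < ε) (hε1 : ε < 1) :
    ∫⁻ ρ in radSet D τ ε, ENNReal.ofReal (ρ ^ (-1 - α)) =
      ENNReal.ofReal (D ^ (-α) * ((1 / α) * ((R / ε + τ) ^ α - (R + τ) ^ α))) := by
  have hτ : |τ| < R := abs_lt_of_sq_lt_sq (by linarith) hR.le
  have hτ' := abs_lt.1 hτ
  have hp : ∀ z ∈ Icc ε 1, 0 < R + τ * z := by
    intro z hz
    have := hε.trans_le hz.1
    nlinarith [hz.2]
  rw [half_cov hD hR hRD hε hε1, ← m1_ftc h1 hε hε1 hτ, ← intervalIntegral.integral_const_mul,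
    intervalIntegral.integral_of_le hε1.le, integral_Ioc_eq_integral_Ioo,
    ofReal_integral_eq_lintegral_ofReal]
  · apply setLIntegral_congr_fun measurableSet_Ioo
    intro z hz
    have hz0 := hε.trans hz.1
    have := hp z ⟨hz.1.le, hz.2.le⟩
    simp only
    rw [← ENNReal.ofReal_mul (by positivity)]
    congr 1
    rw [Real.div_rpow (by positivity) this.le, Real.mul_rpow hD.le hz0.le,
      show (-α) = 1 + (-1 - α) by ring, Real.rpow_add hD, Real.rpow_one,
      show (α - 1) = -2 - (-1 - α) by ring, Real.rpow_sub this (-2) (-1 - α), Real.rpow_neg this.le 2]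
    norm_num
    field_simp
  · apply ContinuousOn.integrableOn_Icc _ |>.mono_set Ioo_subset_Icc_self
    apply ContinuousOn.mul (by fun_prop)
    apply ContinuousOn.mul
    · apply ContinuousOn.mul (by fun_prop)
      apply ContinuousOn.rpow_const (by fun_prop)
      intro x hx; right; linarith
    · apply ContinuousOn.rpow_const (by fun_prop)
      intro x hx; left; linarith [hx.1]
  · refine ae_restrict_of_forall_mem measurableSet_Ioo (fun z hz ↦ ?_)
    have hz0 := hε.trans hz.1
    have := hp z ⟨hz.1.le, hz.2.le⟩
    simp only [Pi.zero_apply]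
    positivity

theorem m2_eq {α D R τ ε : ℝ} (h1 : 1 < α) (hD : 0 < D) (hR : 0 < R) (hRD : R ^ 2 = D + τ ^ 2)
    (hε : 0 < ε) (hε1 : ε < 1) :
    ∫⁻ ρ in radSet D τ ε, ENNReal.ofReal ((D - 2 * ρ * τ - ρ ^ 2) ^ ((α - 1) / 2) * ρ ^ (-1 - α)) =
      ENNReal.ofReal (D ^ ((α - 1) / 2 - α) * R ^ α * Ieps α ε) := by
  have hτ : |τ| < R := abs_lt_of_sq_lt_sq (by linarith) hR.le
  have hτ' := abs_lt.1 hτ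
  have hp : ∀ z ∈ Icc ε 1, 0 < R + τ * z := by
    intro z hz
    have := hε.trans_le hz.1
    nlinarith [hz.2]
  rw [half_cov hD hR hRD hε hε1, Ieps, ← intervalIntegral.integral_const_mul,
    intervalIntegral.integral_of_le hε1.le, integral_Ioc_eq_integral_Ioo,
    ofReal_integral_eq_lintegral_ofReal]
  · apply setLIntegral_congr_fun measurableSet_Ioo
    intro z hz
    have hz0 := hε.trans hz.1
    have hpz := hp z ⟨hz.1.le, hz.2.le⟩
    have hpz' := hpz.ne'
    have hz3 : 0 < 1 - z ^ 2 := by nlinarith [hz.2]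
    have e1 : D - 2 * (D * z / (R + τ * z)) * τ - (D * z / (R + τ * z)) ^ 2
        = D * (R / (R + τ * z)) ^ 2 * (1 - z ^ 2) := alg1 hpz' rfl hRD
    simp only
    rw [e1, ← ENNReal.ofReal_mul (by positivity)]
    congr 1
    have e2 : ((R / (R + τ * z)) ^ 2) ^ ((α - 1) / 2) = (R / (R + τ * z)) ^ (α - 1) := by
      rw [← Real.rpow_natCast _ 2, ← Real.rpow_mul (by positivity)]
      congr 1; push_cast; ring
    have e3 : D * z / (R + τ * z) = D * z * (R / (R + τ * z)) / R := by field_simp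
    have e4 : D * R / (R + τ * z) ^ 2 = D / R * (R / (R + τ * z)) ^ (2:ℝ) := by
      rw [Real.rpow_two]; field_simp
    set Q := R / (R + τ * z) with hQ
    have hQ0 : 0 < Q := by positivity
    rw [Real.mul_rpow (by positivity) hz3.le, Real.mul_rpow hD.le (by positivity), e2, e3, e4,
      Real.div_rpow (by positivity) hR.le, Real.mul_rpow (by positivity) hQ0.le,
      Real.mul_rpow hD.le hz0.le]
    have f1 : D ^ ((α - 1) / 2 - α) = D * D ^ ((α - 1) / 2) * D ^ (-1 - α) := by
      rw [show (α - 1) / 2 - α = 1 + (α - 1) / 2 + (-1 - α) by ring, Real.rpow_add hD,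
        Real.rpow_add hD, Real.rpow_one]
    have f2 : Q ^ (2:ℝ) * Q ^ (α - 1) * Q ^ (-1 - α) = 1 := by
      rw [← Real.rpow_add hQ0, ← Real.rpow_add hQ0]
      convert Real.rpow_zero Q using 2; ring
    have f3 : R ^ α = (R * R ^ (-1 - α))⁻¹ := by
      rw [show -1 - α = -(α + 1) by ring, Real.rpow_neg hR.le, Real.rpow_add hR, Real.rpow_one]
      field_simp
    rw [f1, f3]
    calc _ = (Q ^ (2:ℝ) * Q ^ (α - 1) * Q ^ (-1 - α)) * ((D * D ^ ((α - 1) / 2) * D ^ (-1 - α)) *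
        (R * R ^ (-1 - α))⁻¹ * ((1 - z ^ 2) ^ ((α - 1) / 2) * z ^ (-1 - α))) := by
          field_simp
      _ = _ := by rw [f2, one_mul]
  · apply ContinuousOn.integrableOn_Icc _ |>.mono_set Ioo_subset_Icc_self
    apply ContinuousOn.mul (by fun_prop)
    exact Ieps_cont h1 hε
  · refine ae_restrict_of_forall_mem measurableSet_Ioo (fun z hz ↦ ?_)
    have hz0 := hε.trans hz.1
    have hz3 : 0 < 1 - z ^ 2 := by nlinarith [hz.2]
    simp only [Pi.zero_apply]
    positivity

/-- the key one dimensional inequality, symmetrised over the two directions -/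
theorem pair_ineq {α D R τ ε s : ℝ} (h1 : 1 < α) (h2 : α < 2) (hD : 0 < D) (hR : 0 < R) (hR1 : R ≤ 1)
    (hRD : R ^ 2 = D + τ ^ 2) (hε : 0 < ε) (hε1 : ε < 1) (hs : |s| ≤ R) :
    2 * (D ^ ((α - 1) / 2 - α) * R ^ α * Ieps α ε) +
      D ^ ((α - 1) / 2 - α) / α * ((eulerBeta ((1 + α) / 2) ((2 - α) / 2) - 2 ^ α) * |s| ^ α +
        (2 ^ α - 2) / 2 * D) ≤
    D ^ ((α - 1) / 2) * (D ^ (-α) * ((1 / α) * ((R / ε + τ) ^ α - (R + τ) ^ α)) +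
      D ^ (-α) * ((1 / α) * ((R / ε - τ) ^ α - (R - τ) ^ α))) +
      D ^ ((α - 1) / 2 - α) / α * deltaEps α ε := by
  have hτ : |τ| < R := abs_lt_of_sq_lt_sq (by linarith) hR.le
  have b1 := Ieps_bound h1 h2 hε hε1
  have b2 := two_rpow_le_beta h1 h2
  have b3 := conv_pow_le h1 h2 hR hτ
  have b4 := conv_pow_ge (A := R / ε) (τ := τ) h1 (by
    apply hτ.le.trans; rw [le_div_iff₀ hε]; nlinarith)
  have hd := deltaEps_nonneg h1 hε hε1
  set β := eulerBeta ((1 + α) / 2) ((2 - α) / 2)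
  have e1 : D ^ ((α - 1) / 2 - α) = D ^ ((α - 1) / 2) * D ^ (-α) := by
    rw [← Real.rpow_add hD]; rfl
  have hs' : |s| ^ α ≤ R ^ α := Real.rpow_le_rpow (abs_nonneg _) hs (by linarith)
  have hRa : R ^ α ≤ 1 := Real.rpow_le_one hR.le hR1 (by linarith)
  have hRa0 : 0 < R ^ α := by positivity
  have hR2 : 1 ≤ R ^ (α - 2) := Real.one_le_rpow_of_pos_of_le_one_of_nonpos hR hR1 (by linarith)
  have h2' : (2:ℝ) < 2 ^ α := by
    calc (2:ℝ) = 2 ^ (1:ℝ) := by simp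
      _ < _ := Real.rpow_lt_rpow_of_exponent_lt (by norm_num) h1
  have e2 : (R / ε) ^ α = R ^ α * ε ^ (-α) := by
    rw [Real.div_rpow hR.le hε.le, Real.rpow_neg hε.le]; rfl
  rw [e2] at b4
  have hDD : R ^ 2 - τ ^ 2 = D := by linarith
  rw [hDD] at b3
  have key : 2 * α * (R ^ α * Ieps α ε) + ((β - 2 ^ α) * |s| ^ α + (2 ^ α - 2) / 2 * D) ≤
      ((R / ε + τ) ^ α - (R + τ) ^ α) + ((R / ε - τ) ^ α - (R - τ) ^ α) + deltaEps α ε := by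
    have k1 : (β - 2 ^ α) * |s| ^ α ≤ (β - 2 ^ α) * R ^ α := by
      apply mul_le_mul_of_nonneg_left hs'; linarith
    have k2 : (2 ^ α - 2) / 2 * D ≤ (2 ^ α - 2) / 2 * (R ^ (α - 2) * D) := by
      apply mul_le_mul_of_nonneg_left _ (by linarith)
      nlinarith
    have k3 : R ^ α * (β - deltaEps α ε) ≤ R ^ α * (2 * ε ^ (-α) - 2 * α * Ieps α ε) :=
      mul_le_mul_of_nonneg_left b1 hRa0.le
    have k4 : R ^ α * deltaEps α ε ≤ deltaEps α ε := mul_le_of_le_one_left hd hRa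
    linarith
  have hP : 0 ≤ D ^ ((α - 1) / 2) * D ^ (-α) / α := by positivity
  have := mul_le_mul_of_nonneg_left key hP
  rw [e1]
  calc _ = D ^ ((α - 1) / 2) * D ^ (-α) / α * (2 * α * (R ^ α * Ieps α ε) + ((β - 2 ^ α) * |s| ^ α + (2 ^ α - 2) / 2 * D)) := by
        field_simp
    _ ≤ _ := this
    _ = _ := by ring

theorem lintegral_polar {n : ℕ} (hn : 2 ≤ n) (f : EuclideanSpace ℝ (Fin n) → ℝ≥0∞) (hf : Measurable f) :
    ∫⁻ y, f y = ∫⁻ h, (∫⁻ r in Ioi (0:ℝ), ENNReal.ofReal (r ^ (n - 1)) * f (r • h.1))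
      ∂(volume : Measure (EuclideanSpace ℝ (Fin n))).toSphere := by
  have : Nonempty (Fin n) := ⟨⟨0, by omega⟩⟩
  have : Nontrivial (EuclideanSpace ℝ (Fin n)) := inferInstance
  set μ := (volume : Measure (EuclideanSpace ℝ (Fin n)))
  have hd : Module.finrank ℝ (EuclideanSpace ℝ (Fin n)) = n := by simp
  calc ∫⁻ y, f y ∂μ = ∫⁻ y : ({0}ᶜ : Set (EuclideanSpace ℝ (Fin n))), f y ∂(μ.comap (↑)) := by
        rw [lintegral_subtype_comap (measurableSet_singleton _).compl, restrict_compl_singleton]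
    _ = ∫⁻ p, f (p.2.1 • p.1.1) ∂μ.toSphere.prod (.volumeIoiPow (n - 1)) := by
        have := μ.measurePreserving_homeomorphUnitSphereProd.lintegral_comp_emb
          (Homeomorph.measurableEmbedding _) (fun p => f (p.2.1 • p.1.1))
        rw [hd] at this
        rw [← this]
        apply lintegral_congr
        intro y
        congr 1
        have hy : ‖(y:EuclideanSpace ℝ (Fin n))‖ ≠ 0 := norm_ne_zero_iff.2 y.2
        simp [smul_smul, hy]
    _ = ∫⁻ h, (∫⁻ r, f (r.1 • h.1) ∂(.volumeIoiPow (n - 1))) ∂μ.toSphere := by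
        rw [lintegral_prod]
        apply Measurable.aemeasurable
        fun_prop
    _ = _ := by
        apply lintegral_congr
        intro h
        rw [Measure.volumeIoiPow, lintegral_withDensity_eq_lintegral_mul _ (by fun_prop) (by fun_prop),
          ← lintegral_subtype_comap measurableSet_Ioi]
        rfl

theorem integral_polar_mul {n : ℕ} (hn : 2 ≤ n) (F : sphere (0 : EuclideanSpace ℝ (Fin n)) 1 → ℝ)
    (G : ℝ → ℝ) (H : EuclideanSpace ℝ (Fin n) → ℝ)
    (hH : ∀ (r : ℝ) (h : sphere (0 : EuclideanSpace ℝ (Fin n)) 1), 0 < r → H (r • h.1) = F h * G r) :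
    ∫ y, H y = (∫ h, F h ∂(volume : Measure (EuclideanSpace ℝ (Fin n))).toSphere) *
      ∫ r in Ioi (0:ℝ), r ^ (n - 1) * G r := by
  have : Nonempty (Fin n) := ⟨⟨0, by omega⟩⟩
  have : Nontrivial (EuclideanSpace ℝ (Fin n)) := inferInstance
  set μ := (volume : Measure (EuclideanSpace ℝ (Fin n)))
  have hd : Module.finrank ℝ (EuclideanSpace ℝ (Fin n)) = n := by simp
  calc ∫ y, H y ∂μ = ∫ y : ({0}ᶜ : Set (EuclideanSpace ℝ (Fin n))), H y ∂(μ.comap (↑)) := by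
        rw [integral_subtype_comap (measurableSet_singleton _).compl, restrict_compl_singleton]
    _ = ∫ p, F p.1 * G p.2.1 ∂μ.toSphere.prod (.volumeIoiPow (n - 1)) := by
        have := μ.measurePreserving_homeomorphUnitSphereProd.integral_comp
          (Homeomorph.measurableEmbedding _) (fun p => F p.1 * G p.2.1)
        rw [hd] at this
        rw [← this]
        apply integral_congr_ae
        refine Eventually.of_forall fun y => ?_
        simp only
        rw [← hH _ _ (homeomorphUnitSphereProd _ y).2.2]
        congr 1
        have hy : ‖(y:EuclideanSpace ℝ (Fin n))‖ ≠ 0 := norm_ne_zero_iff.2 y.2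
        simp [smul_smul, hy]
    _ = (∫ h, F h ∂μ.toSphere) * ∫ r : Ioi (0:ℝ), G r.1 ∂(.volumeIoiPow (n - 1)) :=
        integral_prod_mul F (fun r : Ioi (0:ℝ) => G r.1)
    _ = _ := by
      congr 1
      simp only [Measure.volumeIoiPow, ENNReal.ofReal]
      rw [integral_withDensity_eq_integral_smul, 
        integral_subtype_comap measurableSet_Ioi fun a ↦ Real.toNNReal (a ^ (n - 1)) • G a,
        setIntegral_congr_fun measurableSet_Ioi fun x hx ↦ ?_]
      · rw [NNReal.smul_def, Real.coe_toNNReal _ (pow_nonneg hx.out.le _)]; rfl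
      · exact (measurable_subtype_coe.pow_const _).real_toNNReal

theorem gauss_moment {n : ℕ} (hn : 2 ≤ n) {α : ℝ} (h1 : 1 < α) (e : EuclideanSpace ℝ (Fin n))
    (he : ‖e‖ = 1) :
    ∫ y : EuclideanSpace ℝ (Fin n), |inner ℝ e y| ^ α * Real.exp (-‖y‖ ^ 2) =
      Real.pi ^ (((n : ℝ) - 1) / 2) * Real.Gamma ((1 + α) / 2) := by
  let i0 : Fin n := ⟨0, by omega⟩
  obtain ⟨b, hb⟩ : ∃ b : OrthonormalBasis (Fin n) ℝ (EuclideanSpace ℝ (Fin n)), b i0 = e := by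
    obtain ⟨b, hb⟩ := Orthonormal.exists_orthonormalBasis_extension_of_card_eq (𝕜 := ℝ)
      (E := EuclideanSpace ℝ (Fin n)) (ι := Fin n) (by simp) (v := fun _ => e) (s := {i0}) (by
        constructor
        · intro i; simpa using he
        · intro i j hij; exact absurd (Subsingleton.elim i j) hij)
    exact ⟨b, hb i0 rfl⟩
  have hmp := b.measurePreserving_repr
  have s1 : ∫ y : EuclideanSpace ℝ (Fin n), |inner ℝ e y| ^ α * Real.exp (-‖y‖ ^ 2) =
      ∫ y : EuclideanSpace ℝ (Fin n), |y i0| ^ α * Real.exp (-‖y‖ ^ 2) := by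
    rw [← hmp.integral_comp b.repr.toHomeomorph.measurableEmbedding
      (fun y => |y i0| ^ α * Real.exp (-‖y‖ ^ 2))]
    apply integral_congr_ae
    refine Eventually.of_forall fun y => ?_
    simp [b.repr_apply_apply, hb]
  have hmp2 := EuclideanSpace.volume_preserving_symm_measurableEquiv_toLp (Fin n)
  rw [s1, ← hmp2.symm.integral_comp' ]
  have hG0 : ∫ t : ℝ, |t| ^ α * Real.exp (-t ^ 2) = Real.Gamma ((1 + α) / 2) := by
    have := integral_comp_abs (f := fun t => t ^ α * Real.exp (-t ^ 2))
    simp only [sq_abs] at this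
    rw [this]
    have := integral_rpow_mul_exp_neg_rpow (p := 2) (q := α) (by norm_num) (by linarith)
    simp only [Real.rpow_two] at this
    rw [this, add_comm]; ring
  have hG1 : ∫ t : ℝ, Real.exp (-t ^ 2) = √Real.pi := by
    have := integral_gaussian 1
    simpa using this
  have s2 : ∀ y : Fin n → ℝ, |((MeasurableEquiv.toLp 2 (Fin n → ℝ)) y) i0| ^ α *
      Real.exp (-‖(MeasurableEquiv.toLp 2 (Fin n → ℝ)) y‖ ^ 2) =
      ∏ i, (fun t : ℝ => (if i = i0 then |t| ^ α else 1) * Real.exp (-t ^ 2)) (y i) := by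
    intro y
    rw [Finset.prod_mul_distrib, ← Real.exp_sum]
    simp [EuclideanSpace.norm_sq_eq]
  have s3 : ∀ i : Fin n, ∫ t : ℝ, (if i = i0 then |t| ^ α else 1) * Real.exp (-t ^ 2) =
      if i = i0 then Real.Gamma ((1 + α) / 2) else √Real.pi := by
    intro i
    split_ifs with h
    · exact hG0
    · simpa using hG1
  have hcong : ∫ y : Fin n → ℝ, |((MeasurableEquiv.toLp 2 (Fin n → ℝ)) y) i0| ^ α *
      Real.exp (-‖(MeasurableEquiv.toLp 2 (Fin n → ℝ)) y‖ ^ 2) = ∏ i : Fin n, 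
      if i = i0 then Real.Gamma ((1 + α) / 2) else √Real.pi := by
    refine (integral_congr_ae (Eventually.of_forall s2)).trans ?_
    refine (integral_fintype_prod_volume_eq_prod
      (fun (i : Fin n) (t : ℝ) => (if i = i0 then |t| ^ α else 1) * Real.exp (-t ^ 2))).trans ?_
    exact Finset.prod_congr rfl fun i _ => s3 i
  refine hcong.trans ?_
  rw [← Finset.mul_prod_erase _ _ (Finset.mem_univ i0), if_pos rfl, mul_comm]
  congr 1
  rw [Finset.prod_congr rfl (g := fun _ => √Real.pi)
    (fun i hi => by rw [if_neg (Finset.ne_of_mem_erase hi)]), Finset.prod_const,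
    Finset.card_erase_of_mem (Finset.mem_univ _), Finset.card_univ, Fintype.card_fin,
    Real.sqrt_eq_rpow, ← Real.rpow_natCast, ← Real.rpow_mul Real.pi_pos.le]
  congr 1
  rw [Nat.cast_sub (by omega)]; push_cast; ring

theorem sphere_moment {n : ℕ} (hn : 2 ≤ n) {α : ℝ} (h1 : 1 < α) (e : EuclideanSpace ℝ (Fin n))
    (he : ‖e‖ = 1) :
    ∫ h, |inner ℝ e h.1| ^ α ∂(volume : Measure (EuclideanSpace ℝ (Fin n))).toSphere =
      2 * (Real.pi ^ (((n : ℝ) - 1) / 2) * (Real.Gamma ((1 + α) / 2) / Real.Gamma ((n + α) / 2))) := by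
  have hp := integral_polar_mul hn (fun h => |inner ℝ e h.1| ^ α) (fun r => r ^ α * Real.exp (-r ^ 2))
    (fun y => |inner ℝ e y| ^ α * Real.exp (-‖y‖ ^ 2)) (by
      intro r h hr
      have : ‖h.1‖ = 1 := by simpa using h.2
      simp only [inner_smul_right, norm_smul, this, mul_one, abs_mul, abs_of_pos hr, Real.norm_eq_abs]
      rw [Real.mul_rpow hr.le (abs_nonneg _)]
      ring)
  rw [gauss_moment hn h1 e he] at hp
  have hr : ∫ r in Ioi (0:ℝ), r ^ (n - 1) * (r ^ α * Real.exp (-r ^ 2)) = 1 / 2 * Real.Gamma ((n + α) / 2) := by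
    have := integral_rpow_mul_exp_neg_rpow (p := 2) (q := (n:ℝ) - 1 + α) (by norm_num) (by
      have : (2:ℝ) ≤ n := by exact_mod_cast hn
      linarith)
    rw [show ((n:ℝ) - 1 + α + 1) / 2 = (n + α) / 2 by ring] at this
    rw [← this]
    apply setIntegral_congr_fun measurableSet_Ioi
    intro r hr
    simp only
    rw [Real.rpow_add hr, ← mul_assoc, Real.rpow_two]
    congr 2
    rw [← Real.rpow_natCast, Nat.cast_sub (by omega)]; simp
  rw [hr] at hp
  have hG : 0 < Real.Gamma ((n + α) / 2) := Real.Gamma_pos_of_pos (by positivity)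
  field_simp at hp ⊢
  linarith

/-- Truncated section. -/
def ySet (n : ℕ) (ε : ℝ) (x : EuclideanSpace ℝ (Fin n)) : Set (EuclideanSpace ℝ (Fin n)) :=
  {y | ‖y‖ < 1 ∧ (1 - ‖x‖ ^ 2) * (1 - ‖y‖ ^ 2) < (1 - ε ^ 2) * (1 - inner ℝ x y) ^ 2}

theorem ySet_meas (n : ℕ) (ε : ℝ) (x : EuclideanSpace ℝ (Fin n)) : MeasurableSet (ySet n ε x) := by
  have : ySet n ε x = {y | ‖y‖ < 1} ∩
      {y | (1 - ‖x‖ ^ 2) * (1 - ‖y‖ ^ 2) < (1 - ε ^ 2) * (1 - inner ℝ x y) ^ 2} := by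
    ext y; simp [ySet]
  rw [this]
  exact (measurableSet_lt (by fun_prop) (by fun_prop)).inter
    (measurableSet_lt (by fun_prop) (Continuous.measurable (by fun_prop)))

theorem radSet_meas (D τ ε : ℝ) : MeasurableSet (radSet D τ ε) := by
  have : radSet D τ ε = {ρ | 0 < ρ} ∩ ({ρ | 0 < D - 2 * ρ * τ - ρ ^ 2} ∩
      {ρ | D * (D - 2 * ρ * τ - ρ ^ 2) < (1 - ε ^ 2) * (D - ρ * τ) ^ 2}) := by
    ext y; simp [radSet]
  rw [this]
  exact (measurableSet_lt (by fun_prop) (by fun_prop)).inter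
    ((measurableSet_lt (by fun_prop) (by fun_prop)).inter
    (measurableSet_lt (by fun_prop) (by fun_prop)))

theorem shift_norm {n : ℕ} (x h : EuclideanSpace ℝ (Fin n)) (hh : ‖h‖ = 1) (r : ℝ) :
    1 - ‖x + r • h‖ ^ 2 = (1 - ‖x‖ ^ 2) - 2 * r * inner ℝ x h - r ^ 2 := by
  rw [norm_add_sq_real, inner_smul_right, norm_smul, hh, mul_one, Real.norm_eq_abs, sq_abs]
  ring

theorem mem_radSet_iff {n : ℕ} (x h : EuclideanSpace ℝ (Fin n)) (hh : ‖h‖ = 1) {r ε : ℝ}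
    (hr : 0 < r) :
    x + r • h ∈ ySet n ε x ↔ r ∈ radSet (1 - ‖x‖ ^ 2) (inner ℝ x h) ε := by
  simp only [ySet, radSet, mem_ofPred_eq]
  rw [shift_norm x h hh, inner_add_right, inner_smul_right, real_inner_self_eq_norm_sq]
  have h1 : ‖x + r • h‖ < 1 ↔ 0 < (1 - ‖x‖ ^ 2) - 2 * r * inner ℝ x h - r ^ 2 := by
    rw [← shift_norm x h hh, sub_pos, sq_lt_one_iff₀ (norm_nonneg _)]
  rw [h1, show (1 - (‖x‖ ^ 2 + r * inner ℝ x h)) = (1 - ‖x‖ ^ 2 - r * inner ℝ x h) by ring]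
  simp [hr]

theorem polar_x {n : ℕ} (hn : 2 ≤ n) (α ε : ℝ) (x : EuclideanSpace ℝ (Fin n))
    (g : EuclideanSpace ℝ (Fin n) → ℝ) (hg : Measurable g) (s : ℝ) (hs : s = 1 ∨ s = -1) :
    ∫⁻ y in ySet n ε x, ENNReal.ofReal (g y / ‖x - y‖ ^ ((n : ℝ) + α)) =
      ∫⁻ h, (∫⁻ r in radSet (1 - ‖x‖ ^ 2) (s * inner ℝ x h.1) ε,
        ENNReal.ofReal (g (x + r • (s • h.1)) * r ^ (-1 - α)))
      ∂(volume : Measure (EuclideanSpace ℝ (Fin n))).toSphere := by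
  set f : EuclideanSpace ℝ (Fin n) → ℝ≥0∞ := (ySet n ε x).indicator
    (fun y => ENNReal.ofReal (g y / ‖x - y‖ ^ ((n : ℝ) + α))) with hf
  have hfm : Measurable f := by
    apply Measurable.indicator _ (ySet_meas n ε x)
    fun_prop
  have h0 : ∫⁻ y, f y = ∫⁻ y, f (x + s • y) := by
    rcases hs with rfl | rfl
    · simp only [one_smul]
      exact (lintegral_add_left_eq_self f x).symm
    · simp only [neg_smul, one_smul, ← sub_eq_add_neg]
      exact (lintegral_sub_left_eq_self f x).symm
  rw [← lintegral_indicator (ySet_meas n ε x), ← hf, h0,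
    lintegral_polar hn (fun y => f (x + s • y)) (by fun_prop)]
  apply lintegral_congr
  intro h
  have hh : ‖h.1‖ = 1 := by simp
  have hsh : ‖s • h.1‖ = 1 := by
    rcases hs with rfl | rfl <;> simp [hh]
  have hi : s * inner ℝ x h.1 = inner ℝ x (s • h.1) := (inner_smul_right _ _ _).symm
  rw [hi, ← lintegral_indicator measurableSet_Ioi, ← lintegral_indicator (radSet_meas _ _ _)]
  apply lintegral_congr
  intro r
  by_cases hr : 0 < r
  · rw [indicator_of_mem (show r ∈ Ioi (0:ℝ) from hr), smul_comm s r]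
    by_cases hm : x + r • (s • h.1) ∈ ySet n ε x
    · rw [hf, indicator_of_mem hm, indicator_of_mem ((mem_radSet_iff x _ hsh hr).1 hm),
        ← ENNReal.ofReal_mul (by positivity)]
      congr 1
      rw [show x - (x + r • s • h.1) = -(r • s • h.1) by abel, norm_neg, norm_smul, hsh, mul_one,
        Real.norm_eq_abs, abs_of_pos hr, div_eq_mul_inv, ← Real.rpow_neg hr.le, ← Real.rpow_natCast,
        mul_left_comm, ← Real.rpow_add hr, Nat.cast_sub (by omega)]
      congr 2
      push_cast; ring
    · rw [hf, indicator_of_notMem hm, indicator_of_notMem (fun hc => hm ((mem_radSet_iff x _ hsh hr).2 hc)),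
        mul_zero]
  · rw [indicator_of_notMem (show r ∉ Ioi (0:ℝ) from hr), indicator_of_notMem (fun hc => hr hc.1)]

theorem M1_eq {n : ℕ} (hn : 2 ≤ n) {α ε : ℝ} (h1 : 1 < α) (hε : 0 < ε) (hε1 : ε < 1)
    (x : EuclideanSpace ℝ (Fin n)) (hx : ‖x‖ < 1) (s : ℝ) (hs : s = 1 ∨ s = -1) :
    ∫⁻ y in ySet n ε x, ENNReal.ofReal (1 / ‖x - y‖ ^ ((n : ℝ) + α)) =
      ∫⁻ h, ENNReal.ofReal ((1 - ‖x‖ ^ 2) ^ (-α) * ((1 / α) *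
        ((√((1 - ‖x‖ ^ 2) + (inner ℝ x h.1) ^ 2) / ε + s * inner ℝ x h.1) ^ α -
          (√((1 - ‖x‖ ^ 2) + (inner ℝ x h.1) ^ 2) + s * inner ℝ x h.1) ^ α)))
      ∂(volume : Measure (EuclideanSpace ℝ (Fin n))).toSphere := by
  rw [polar_x hn α ε x (fun _ => 1) measurable_const s hs]
  apply lintegral_congr
  intro h
  have hD : 0 < 1 - ‖x‖ ^ 2 := by nlinarith [norm_nonneg x]
  simp only [one_mul]
  have hs2 : s ^ 2 = 1 := by rcases hs with rfl | rfl <;> norm_num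
  apply m1_eq h1 hD (Real.sqrt_pos.2 (by positivity)) _ hε hε1
  rw [Real.sq_sqrt (by positivity), mul_pow, hs2, one_mul]

theorem M2_eq {n : ℕ} (hn : 2 ≤ n) {α ε : ℝ} (h1 : 1 < α) (hε : 0 < ε) (hε1 : ε < 1)
    (x : EuclideanSpace ℝ (Fin n)) (hx : ‖x‖ < 1) :
    ∫⁻ y in ySet n ε x, ENNReal.ofReal ((1 - ‖y‖ ^ 2) ^ ((α - 1) / 2) / ‖x - y‖ ^ ((n : ℝ) + α)) =
      ∫⁻ h, ENNReal.ofReal ((1 - ‖x‖ ^ 2) ^ ((α - 1) / 2 - α) *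
        (√((1 - ‖x‖ ^ 2) + (inner ℝ x h.1) ^ 2)) ^ α * Ieps α ε)
      ∂(volume : Measure (EuclideanSpace ℝ (Fin n))).toSphere := by
  rw [polar_x hn α ε x (fun y => (1 - ‖y‖ ^ 2) ^ ((α - 1) / 2)) (by fun_prop) 1 (Or.inl rfl)]
  apply lintegral_congr
  intro h
  have hD : 0 < 1 - ‖x‖ ^ 2 := by nlinarith [norm_nonneg x]
  have hh : ‖h.1‖ = 1 := by simp
  simp only [one_mul, one_smul, shift_norm x _ hh]
  apply m2_eq h1 hD (Real.sqrt_pos.2 (by positivity)) _ hε hε1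
  rw [Real.sq_sqrt (by positivity)]

theorem L12 {n : ℕ} (hn : 2 ≤ n) {α ε : ℝ} (h1 : 1 < α) (h2 : α < 2) (hε : 0 < ε) (hε1 : ε < 1)
    (x : EuclideanSpace ℝ (Fin n)) (hx : ‖x‖ < 1) :
    2 * (∫⁻ y in ySet n ε x,
        ENNReal.ofReal ((1 - ‖y‖ ^ 2) ^ ((α - 1) / 2) / ‖x - y‖ ^ ((n : ℝ) + α))) +
      ENNReal.ofReal ((1 - ‖x‖ ^ 2) ^ ((α - 1) / 2 - α) / α *
        ((eulerBeta ((1 + α) / 2) ((2 - α) / 2) - 2 ^ α) *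
          (2 * (Real.pi ^ (((n : ℝ) - 1) / 2) * (Real.Gamma ((1 + α) / 2) / Real.Gamma ((n + α) / 2)))) +
          (2 ^ α - 2) / 2 * (1 - ‖x‖ ^ 2) *
            (volume : Measure (EuclideanSpace ℝ (Fin n))).toSphere.real univ)) ≤
    2 * (ENNReal.ofReal ((1 - ‖x‖ ^ 2) ^ ((α - 1) / 2)) *
      ∫⁻ y in ySet n ε x, ENNReal.ofReal (1 / ‖x - y‖ ^ ((n : ℝ) + α))) +
      ENNReal.ofReal ((1 - ‖x‖ ^ 2) ^ ((α - 1) / 2 - α) / α * deltaEps α ε *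
        (volume : Measure (EuclideanSpace ℝ (Fin n))).toSphere.real univ) := by
  have hD : 0 < 1 - ‖x‖ ^ 2 := by nlinarith [norm_nonneg x]
  have hD1 : 1 - ‖x‖ ^ 2 ≤ 1 := by nlinarith [norm_nonneg x]
  obtain ⟨e, he, hxe⟩ : ∃ e : EuclideanSpace ℝ (Fin n), ‖e‖ = 1 ∧ x = ‖x‖ • e := by
    by_cases h0 : x = 0
    · refine ⟨EuclideanSpace.single ⟨0, by omega⟩ 1, by simp, by simp [h0]⟩
    · have : ‖x‖ ≠ 0 := norm_ne_zero_iff.2 h0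
      exact ⟨‖x‖⁻¹ • x, by simp [norm_smul, this], by simp [smul_smul, this]⟩
  set σ := (volume : Measure (EuclideanSpace ℝ (Fin n))).toSphere
  set β := eulerBeta ((1 + α) / 2) ((2 - α) / 2)
  set D := 1 - ‖x‖ ^ 2 with hDdef
  have hβ : 0 ≤ β - 2 ^ α := sub_nonneg.2 (two_rpow_le_beta h1 h2)
  have h2α : (0:ℝ) ≤ 2 ^ α - 2 := by
    have := Real.rpow_le_rpow_of_exponent_le (by norm_num : (1:ℝ) ≤ 2) h1.le
    rw [Real.rpow_one] at this; linarith
  have hDa : 0 ≤ D ^ ((α - 1) / 2 - α) / α := by positivity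
  have hInt0 : Integrable (fun h : sphere (0 : EuclideanSpace ℝ (Fin n)) 1 => |inner ℝ e h.1| ^ α) σ := by
    apply Continuous.integrable_of_hasCompactSupport
    · have : Continuous (fun h : sphere (0 : EuclideanSpace ℝ (Fin n)) 1 => |inner ℝ e h.1|) := by
        fun_prop
      exact this.rpow_const fun _ => Or.inr (by linarith)
    · exact HasCompactSupport.of_compactSpace _
  have e1 : ENNReal.ofReal (D ^ ((α - 1) / 2 - α) / α *
        ((β - 2 ^ α) *
          (2 * (Real.pi ^ (((n : ℝ) - 1) / 2) * (Real.Gamma ((1 + α) / 2) / Real.Gamma ((n + α) / 2)))) +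
          (2 ^ α - 2) / 2 * D * σ.real univ)) =
      ∫⁻ h, ENNReal.ofReal (D ^ ((α - 1) / 2 - α) / α *
        ((β - 2 ^ α) * |inner ℝ e h.1| ^ α + (2 ^ α - 2) / 2 * D)) ∂σ := by
    rw [← ofReal_integral_eq_lintegral_ofReal]
    · congr 1
      rw [integral_const_mul, integral_add (hInt0.const_mul _) (integrable_const _), integral_const_mul,
        sphere_moment hn h1 e he, integral_const, smul_eq_mul]
      ring
    · exact ((hInt0.const_mul _).add (integrable_const _)).const_mul _
    · exact Eventually.of_forall fun h => by positivity
  have e2 : ENNReal.ofReal (D ^ ((α - 1) / 2 - α) / α * deltaEps α ε * σ.real univ) =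
      ∫⁻ h, ENNReal.ofReal (D ^ ((α - 1) / 2 - α) / α * deltaEps α ε) ∂σ := by
    rw [lintegral_const, ENNReal.ofReal_mul (mul_nonneg hDa (deltaEps_nonneg h1 hε hε1)),
      measureReal_def, ENNReal.ofReal_toReal (measure_ne_top _ _)]
  have hm := M1_eq hn h1 hε hε1 x hx 1 (Or.inl rfl)
  have hm' := M1_eq hn h1 hε hε1 x hx (-1) (Or.inr rfl)
  have hinm : Measurable (fun h : sphere (0 : EuclideanSpace ℝ (Fin n)) 1 => inner ℝ x h.1) :=
    Continuous.measurable (by fun_prop)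
  rw [e1, e2, M2_eq hn h1 hε hε1 x hx, two_mul (ENNReal.ofReal _ * _)]
  nth_rewrite 1 [hm]
  rw [hm', ← lintegral_const_mul' _ _ ENNReal.ofNat_ne_top, ← lintegral_add_left (by fun_prop),
    ← lintegral_const_mul' _ _ ENNReal.ofReal_ne_top, ← lintegral_const_mul' _ _ ENNReal.ofReal_ne_top,
    ← lintegral_add_left (by fun_prop), ← lintegral_add_left (by fun_prop)]
  apply lintegral_mono
  intro h
  have hh : ‖h.1‖ = 1 := by simp
  simp only
  rw [← hDdef]
  set τ : ℝ := inner ℝ x h.1 with hτ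
  have hτe : τ = ‖x‖ * inner ℝ e h.1 := by
    rw [hτ]; nth_rewrite 1 [hxe]; rw [inner_smul_left]; simp
  have hee : |(inner ℝ e h.1 : ℝ)| ≤ 1 := by
    have := abs_real_inner_le_norm e h.1
    rwa [he, hh, one_mul] at this
  have hee2 : (inner ℝ e h.1 : ℝ) ^ 2 ≤ 1 := by
    rw [← sq_abs]; exact pow_le_one₀ (abs_nonneg _) hee
  have hRpos : 0 < √(D + τ ^ 2) := Real.sqrt_pos.2 (by positivity)
  have hR1 : √(D + τ ^ 2) ≤ 1 := by
    rw [Real.sqrt_le_iff, hτe, hDdef, mul_pow]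
    refine ⟨zero_le_one, ?_⟩
    nlinarith [sq_nonneg ‖x‖]
  have hsR : |(inner ℝ e h.1 : ℝ)| ≤ √(D + τ ^ 2) := by
    apply Real.le_sqrt_of_sq_le
    rw [sq_abs, hτe, hDdef, mul_pow]
    nlinarith [sq_nonneg ‖x‖]
  have key := pair_ineq h1 h2 hD hRpos hR1 (Real.sq_sqrt (by positivity)) hε hε1 hsR
  have hI := Ieps_nonneg (α := α) hε hε1
  have c2 : (2 : ℝ≥0∞) = ENNReal.ofReal 2 := by simp
  rw [show ∀ a : ℝ≥0∞, 2 * a = ENNReal.ofReal 2 * a from fun a => by rw [← c2],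
    ← ENNReal.ofReal_mul (by norm_num), ← ENNReal.ofReal_mul (by positivity),
    ← ENNReal.ofReal_mul (by positivity), ← ENNReal.ofReal_add (by positivity) (by positivity)]
  refine le_trans (ENNReal.ofReal_le_ofReal (key.trans (le_of_eq ?_)))
    (ENNReal.ofReal_add_le.trans (add_le_add ENNReal.ofReal_add_le le_rfl))
  ring_nf

theorem M2_fin {n : ℕ} (hn : 2 ≤ n) {α ε : ℝ} (h1 : 1 < α) (hε : 0 < ε) (hε1 : ε < 1)
    (x : EuclideanSpace ℝ (Fin n)) (hx : ‖x‖ < 1) :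
    ∫⁻ y in ySet n ε x, ENNReal.ofReal ((1 - ‖y‖ ^ 2) ^ ((α - 1) / 2) / ‖x - y‖ ^ ((n : ℝ) + α)) ≤
      ENNReal.ofReal ((1 - ‖x‖ ^ 2) ^ ((α - 1) / 2 - α)) * (ENNReal.ofReal (Ieps α ε) *
        (volume : Measure (EuclideanSpace ℝ (Fin n))).toSphere univ) := by
  have hD : 0 < 1 - ‖x‖ ^ 2 := by nlinarith [norm_nonneg x]
  have hI := Ieps_nonneg (α := α) hε hε1
  rw [M2_eq hn h1 hε hε1 x hx, ← mul_assoc, ← ENNReal.ofReal_mul (by positivity), ← lintegral_const]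
  apply lintegral_mono
  intro h
  have hh : ‖h.1‖ = 1 := by simp
  apply ENNReal.ofReal_le_ofReal
  apply mul_le_mul_of_nonneg_right _ hI
  apply mul_le_of_le_one_right (by positivity)
  apply Real.rpow_le_one (Real.sqrt_nonneg _) _ (by linarith)
  rw [Real.sqrt_le_iff]
  have := abs_real_inner_le_norm x h.1
  rw [hh, mul_one] at this
  have := sq_le_sq' (by linarith [abs_nonneg (inner ℝ x h.1 : ℝ), norm_nonneg x]) this
  rw [sq_abs] at this
  exact ⟨zero_le_one, by linarith⟩

theorem weight_integrable {n : ℕ} (a : ℝ) (u : EuclideanSpace ℝ (Fin n) → ℝ) (hu : Continuous u)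
    (hc : HasCompactSupport u) (hs : tsupport u ⊆ ball (0 : EuclideanSpace ℝ (Fin n)) 1) :
    Integrable (fun x => (u x) ^ 2 * (1 - ‖x‖ ^ 2) ^ a) := by
  have hsub : tsupport (fun x => (u x) ^ 2 * (1 - ‖x‖ ^ 2) ^ a) ⊆ tsupport u := by
    apply closure_mono
    intro x hx
    rw [Function.mem_support] at hx ⊢
    intro h0
    apply hx
    simp [h0]
  apply Continuous.integrable_of_hasCompactSupport
  · apply continuous_of_tsupport
    intro x hx
    have hx1 : ‖x‖ < 1 := by simpa using hs (hsub hx)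
    apply ContinuousAt.mul (by fun_prop)
    apply ContinuousAt.rpow_const (by fun_prop)
    left
    have : 0 < 1 - ‖x‖ ^ 2 := by nlinarith [norm_nonneg x]
    exact this.ne'
  · exact HasCompactSupport.of_support_subset_isCompact hc (subset_closure.trans hsub)

/-- Truncated product set. -/
def tSet (n : ℕ) (ε : ℝ) : Set (EuclideanSpace ℝ (Fin n) × EuclideanSpace ℝ (Fin n)) :=
  {p | ‖p.1‖ < 1 ∧ p.2 ∈ ySet n ε p.1}

theorem mem_tSet {n : ℕ} {ε : ℝ} {p : EuclideanSpace ℝ (Fin n) × EuclideanSpace ℝ (Fin n)} :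
    p ∈ tSet n ε ↔ ‖p.1‖ < 1 ∧ ‖p.2‖ < 1 ∧
      (1 - ‖p.1‖ ^ 2) * (1 - ‖p.2‖ ^ 2) < (1 - ε ^ 2) * (1 - inner ℝ p.1 p.2) ^ 2 := by
  simp [tSet, ySet]

theorem tSet_meas (n : ℕ) (ε : ℝ) : MeasurableSet (tSet n ε) := by
  have : tSet n ε = {p | ‖p.1‖ < 1} ∩ ({p | ‖p.2‖ < 1} ∩
      {p | (1 - ‖p.1‖ ^ 2) * (1 - ‖p.2‖ ^ 2) < (1 - ε ^ 2) * (1 - inner ℝ p.1 p.2) ^ 2}) := by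
    ext p; simp [mem_tSet]
  rw [this]
  exact (measurableSet_lt (by fun_prop) (by fun_prop)).inter
    ((measurableSet_lt (by fun_prop) (by fun_prop)).inter
    (measurableSet_lt (by fun_prop) (Continuous.measurable (by fun_prop))))

theorem tSet_swap (n : ℕ) (ε : ℝ) : Prod.swap ⁻¹' (tSet n ε) = tSet n ε := by
  ext p
  simp only [mem_preimage, mem_tSet, Prod.fst_swap, Prod.snd_swap]
  rw [real_inner_comm, mul_comm (1 - ‖p.2‖ ^ 2)]
  tauto

theorem lint_tSet {n : ℕ} (ε : ℝ)
    (F : EuclideanSpace ℝ (Fin n) × EuclideanSpace ℝ (Fin n) → ℝ≥0∞) (hF : Measurable F) :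
    ∫⁻ p in tSet n ε, F p =
      ∫⁻ x in ball (0 : EuclideanSpace ℝ (Fin n)) 1, ∫⁻ y in ySet n ε x, F (x, y) := by
  rw [← lintegral_indicator (tSet_meas n ε), Measure.volume_eq_prod,
    lintegral_prod _ (hF.indicator (tSet_meas n ε)).aemeasurable,
    ← lintegral_indicator measurableSet_ball]
  apply lintegral_congr
  intro x
  by_cases hx : ‖x‖ < 1
  · rw [indicator_of_mem (by simpa using hx), ← lintegral_indicator (ySet_meas n ε x)]
    apply lintegral_congr
    intro y
    by_cases hy : y ∈ ySet n ε x
    · rw [indicator_of_mem hy, indicator_of_mem]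
      exact ⟨hx, hy⟩
    · rw [indicator_of_notMem hy, indicator_of_notMem]
      exact fun h => hy h.2
  · rw [indicator_of_notMem (by simpa using hx)]
    have : ∀ y, (tSet n ε).indicator F (x, y) = 0 := fun y =>
      indicator_of_notMem (fun h => hx h.1) _
    simp [this]

theorem lint_swap {n : ℕ} (ε : ℝ)
    (F : EuclideanSpace ℝ (Fin n) × EuclideanSpace ℝ (Fin n) → ℝ≥0∞) (hF : Measurable F) :
    ∫⁻ p in tSet n ε, F p.swap = ∫⁻ p in tSet n ε, F p := by
  have := (Measure.measurePreserving_swap (μ := (volume : Measure (EuclideanSpace ℝ (Fin n))))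
    (ν := (volume : Measure (EuclideanSpace ℝ (Fin n))))).setLIntegral_comp_preimage
    (tSet_meas n ε) hF
  rw [tSet_swap] at this
  exact this

theorem trunc_identity {n : ℕ} {α ε : ℝ}
    (u : EuclideanSpace ℝ (Fin n) → ℝ) (hu : Continuous u) :
    (∫⁻ p in tSet n ε, ENNReal.ofReal ((u p.1 - u p.2) ^ 2 / ‖p.1 - p.2‖ ^ ((n : ℝ) + α))) +
      2 * (∫⁻ x in ball (0 : EuclideanSpace ℝ (Fin n)) 1, ENNReal.ofReal (u x ^ 2 / w n α x) *
        ∫⁻ y in ySet n ε x,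
          ENNReal.ofReal ((1 - ‖y‖ ^ 2) ^ ((α - 1) / 2) / ‖x - y‖ ^ ((n : ℝ) + α))) =
    (∫⁻ p in tSet n ε, ENNReal.ofReal ((u p.1 / w n α p.1 - u p.2 / w n α p.2) ^ 2 *
                (w n α p.1 * w n α p.2) / ‖p.1 - p.2‖ ^ ((n : ℝ) + α))) +
      2 * (∫⁻ x in ball (0 : EuclideanSpace ℝ (Fin n)) 1, ENNReal.ofReal (u x ^ 2) *
        ∫⁻ y in ySet n ε x, ENNReal.ofReal (1 / ‖x - y‖ ^ ((n : ℝ) + α))) := by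
  have hw : Measurable (w n α) := by unfold w; fun_prop
  have hum : Measurable u := hu.measurable
  set c1 : EuclideanSpace ℝ (Fin n) × EuclideanSpace ℝ (Fin n) → ℝ≥0∞ := fun p =>
    ENNReal.ofReal (u p.1 ^ 2) * ENNReal.ofReal (1 / ‖p.1 - p.2‖ ^ ((n : ℝ) + α)) with hc1
  set c2 : EuclideanSpace ℝ (Fin n) × EuclideanSpace ℝ (Fin n) → ℝ≥0∞ := fun p =>
    ENNReal.ofReal (u p.1 ^ 2 / w n α p.1) *
      ENNReal.ofReal ((1 - ‖p.2‖ ^ 2) ^ ((α - 1) / 2) / ‖p.1 - p.2‖ ^ ((n : ℝ) + α)) with hc2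
  have m1 : Measurable c1 := by fun_prop
  have m2 : Measurable c2 := by fun_prop
  have e1 : (∫⁻ x in ball (0 : EuclideanSpace ℝ (Fin n)) 1, ENNReal.ofReal (u x ^ 2) *
        ∫⁻ y in ySet n ε x, ENNReal.ofReal (1 / ‖x - y‖ ^ ((n : ℝ) + α))) = ∫⁻ p in tSet n ε, c1 p := by
    rw [lint_tSet ε c1 m1]
    apply lintegral_congr
    intro x
    rw [← lintegral_const_mul' _ _ ENNReal.ofReal_ne_top]
  have e2 : (∫⁻ x in ball (0 : EuclideanSpace ℝ (Fin n)) 1, ENNReal.ofReal (u x ^ 2 / w n α x) *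
        ∫⁻ y in ySet n ε x,
          ENNReal.ofReal ((1 - ‖y‖ ^ 2) ^ ((α - 1) / 2) / ‖x - y‖ ^ ((n : ℝ) + α))) =
      ∫⁻ p in tSet n ε, c2 p := by
    rw [lint_tSet ε c2 m2]
    apply lintegral_congr
    intro x
    rw [← lintegral_const_mul' _ _ ENNReal.ofReal_ne_top]
  have mB : Measurable (fun p : EuclideanSpace ℝ (Fin n) × EuclideanSpace ℝ (Fin n) =>
      ENNReal.ofReal ((u p.1 / w n α p.1 - u p.2 / w n α p.2) ^ 2 *
                (w n α p.1 * w n α p.2) / ‖p.1 - p.2‖ ^ ((n : ℝ) + α))) := by fun_prop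
  have mA : Measurable (fun p : EuclideanSpace ℝ (Fin n) × EuclideanSpace ℝ (Fin n) =>
      ENNReal.ofReal ((u p.1 - u p.2) ^ 2 / ‖p.1 - p.2‖ ^ ((n : ℝ) + α))) := by fun_prop
  rw [e1, e2, two_mul, two_mul]
  nth_rewrite 2 [← lint_swap ε c1 m1]
  nth_rewrite 2 [← lint_swap ε c2 m2]
  rw [← lintegral_add_left m1, ← lintegral_add_left m2, ← lintegral_add_left mA,
    ← lintegral_add_left mB]
  apply setLIntegral_congr_fun (tSet_meas n ε)
  intro p hp
  obtain ⟨hp1, hp2, -⟩ := mem_tSet.1 hp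
  obtain ⟨x, y⟩ := p
  simp only at hp1 hp2
  have hDx : 0 < 1 - ‖x‖ ^ 2 := by nlinarith [norm_nonneg x]
  have hDy : 0 < 1 - ‖y‖ ^ 2 := by nlinarith [norm_nonneg y]
  have hwx : 0 < w n α x := by unfold w; positivity
  have hwy : 0 < w n α y := by unfold w; positivity
  have hk : 0 ≤ ‖x - y‖ ^ ((n : ℝ) + α) := by positivity
  simp only [hc1, hc2, Prod.fst_swap, Prod.snd_swap]
  change _ + (_ * ENNReal.ofReal (w n α y / _) + _ * ENNReal.ofReal (w n α x / _)) = _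
  rw [norm_sub_rev y x]
  set k := ‖x - y‖ ^ ((n : ℝ) + α)
  rw [← ENNReal.ofReal_mul (by positivity), ← ENNReal.ofReal_mul (by positivity),
    ← ENNReal.ofReal_mul (by positivity), ← ENNReal.ofReal_mul (by positivity),
    ← ENNReal.ofReal_add (by positivity) (by positivity),
    ← ENNReal.ofReal_add (by positivity) (by positivity),
    ← ENNReal.ofReal_add (by positivity) (by positivity),
    ← ENNReal.ofReal_add (by positivity) (by positivity)]
  congr 1
  simp only [div_eq_mul_inv, one_mul]
  generalize k⁻¹ = j
  field_simp
  ring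

theorem trunc_ineq {n : ℕ} (hn : 2 ≤ n) {α ε : ℝ} (h1 : 1 < α) (h2 : α < 2) (hε : 0 < ε) (hε1 : ε < 1)
    (u : EuclideanSpace ℝ (Fin n) → ℝ) (hu : Continuous u)
    (hc : HasCompactSupport u) (hs : tsupport u ⊆ ball (0 : EuclideanSpace ℝ (Fin n)) 1) :
    (∫⁻ p in tSet n ε, ENNReal.ofReal ((u p.1 / w n α p.1 - u p.2 / w n α p.2) ^ 2 *
                (w n α p.1 * w n α p.2) / ‖p.1 - p.2‖ ^ ((n : ℝ) + α))) +
      (∫⁻ x in ball (0 : EuclideanSpace ℝ (Fin n)) 1, ENNReal.ofReal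
        (u x ^ 2 * (1 - ‖x‖ ^ 2) ^ (-α) / α *
        ((eulerBeta ((1 + α) / 2) ((2 - α) / 2) - 2 ^ α) *
          (2 * (Real.pi ^ (((n : ℝ) - 1) / 2) * (Real.Gamma ((1 + α) / 2) / Real.Gamma ((n + α) / 2)))) +
          (2 ^ α - 2) / 2 * (1 - ‖x‖ ^ 2) *
            (volume : Measure (EuclideanSpace ℝ (Fin n))).toSphere.real univ))) ≤
    (∫⁻ p in tSet n ε, ENNReal.ofReal ((u p.1 - u p.2) ^ 2 / ‖p.1 - p.2‖ ^ ((n : ℝ) + α))) +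
      ENNReal.ofReal (deltaEps α ε) * ∫⁻ x in ball (0 : EuclideanSpace ℝ (Fin n)) 1, ENNReal.ofReal
        (u x ^ 2 * (1 - ‖x‖ ^ 2) ^ (-α) / α *
          (volume : Measure (EuclideanSpace ℝ (Fin n))).toSphere.real univ) := by
  have hw : Measurable (w n α) := by unfold w; fun_prop
  have hum : Measurable u := hu.measurable
  have hid := trunc_identity (α := α) (ε := ε) u hu
  have hδ := deltaEps_nonneg h1 hε hε1
  set A := ∫⁻ p in tSet n ε, ENNReal.ofReal ((u p.1 - u p.2) ^ 2 / ‖p.1 - p.2‖ ^ ((n : ℝ) + α))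
  set Bt := ∫⁻ p in tSet n ε, ENNReal.ofReal ((u p.1 / w n α p.1 - u p.2 / w n α p.2) ^ 2 *
                (w n α p.1 * w n α p.2) / ‖p.1 - p.2‖ ^ ((n : ℝ) + α))
  set S := (volume : Measure (EuclideanSpace ℝ (Fin n))).toSphere.real univ with hS
  set Q : ℝ → ℝ := fun d => ((eulerBeta ((1 + α) / 2) ((2 - α) / 2) - 2 ^ α) *
          (2 * (Real.pi ^ (((n : ℝ) - 1) / 2) * (Real.Gamma ((1 + α) / 2) / Real.Gamma ((n + α) / 2)))) +
          (2 ^ α - 2) / 2 * d * S) with hQ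
  have hfacts : ∀ x ∈ ball (0 : EuclideanSpace ℝ (Fin n)) 1, 0 < 1 - ‖x‖ ^ 2 ∧ 0 < w n α x ∧
      u x ^ 2 / w n α x * (1 - ‖x‖ ^ 2) ^ ((α - 1) / 2 - α) = u x ^ 2 * (1 - ‖x‖ ^ 2) ^ (-α) := by
    intro x hx
    have hx1 : ‖x‖ < 1 := by simpa using hx
    have hDx : 0 < 1 - ‖x‖ ^ 2 := by nlinarith [norm_nonneg x]
    have hwx : 0 < w n α x := by unfold w; positivity
    refine ⟨hDx, hwx, ?_⟩
    rw [sub_eq_add_neg ((α - 1) / 2), Real.rpow_add hDx]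
    change _ * (w n α x * _) = _
    field_simp
  set C2 := ∫⁻ x in ball (0 : EuclideanSpace ℝ (Fin n)) 1, ENNReal.ofReal (u x ^ 2 / w n α x) *
        ∫⁻ y in ySet n ε x,
          ENNReal.ofReal ((1 - ‖y‖ ^ 2) ^ ((α - 1) / 2) / ‖x - y‖ ^ ((n : ℝ) + α)) with hC2
  set C1 := ∫⁻ x in ball (0 : EuclideanSpace ℝ (Fin n)) 1, ENNReal.ofReal (u x ^ 2) *
        ∫⁻ y in ySet n ε x, ENNReal.ofReal (1 / ‖x - y‖ ^ ((n : ℝ) + α)) with hC1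
  have hC2fin : C2 ≠ ⊤ := by
    have : C2 ≤ ∫⁻ x in ball (0 : EuclideanSpace ℝ (Fin n)) 1,
        ENNReal.ofReal (u x ^ 2 * (1 - ‖x‖ ^ 2) ^ (-α)) * (ENNReal.ofReal (Ieps α ε) *
        (volume : Measure (EuclideanSpace ℝ (Fin n))).toSphere univ) := by
      apply setLIntegral_mono' measurableSet_ball
      intro x hx
      obtain ⟨hDx, hwx, he⟩ := hfacts x hx
      refine (mul_le_mul_right (M2_fin hn h1 hε hε1 x (by simpa using hx)) _).trans (le_of_eq ?_)
      rw [← mul_assoc, ← ENNReal.ofReal_mul (by positivity), he]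
    refine ne_top_of_le_ne_top ?_ this
    have hfin : ENNReal.ofReal (Ieps α ε) *
        (volume : Measure (EuclideanSpace ℝ (Fin n))).toSphere univ ≠ ⊤ :=
      ENNReal.mul_ne_top ENNReal.ofReal_ne_top (measure_ne_top _ _)
    rw [lintegral_mul_const' _ _ hfin]
    apply ENNReal.mul_ne_top _ hfin
    exact ((weight_integrable (-α) u hu hc hs).integrableOn.lintegral_lt_top).ne
  have hmain : 2 * C2 + (∫⁻ x in ball (0 : EuclideanSpace ℝ (Fin n)) 1, ENNReal.ofReal
        (u x ^ 2 * (1 - ‖x‖ ^ 2) ^ (-α) / α * Q (1 - ‖x‖ ^ 2))) ≤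
      2 * C1 + ENNReal.ofReal (deltaEps α ε) *
        ∫⁻ x in ball (0 : EuclideanSpace ℝ (Fin n)) 1, ENNReal.ofReal
        (u x ^ 2 * (1 - ‖x‖ ^ 2) ^ (-α) / α * S) := by
    rw [hC2, hC1, ← lintegral_const_mul' _ _ ENNReal.ofNat_ne_top,
      ← lintegral_const_mul' _ _ ENNReal.ofNat_ne_top,
      ← lintegral_const_mul' _ _ ENNReal.ofReal_ne_top,
      ← lintegral_add_right _ (by fun_prop), ← lintegral_add_right _ (by fun_prop)]
    apply setLIntegral_mono' measurableSet_ball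
    intro x hx
    obtain ⟨hDx, hwx, he⟩ := hfacts x hx
    have key := mul_le_mul_right (L12 hn h1 h2 hε hε1 x (by simpa using hx))
      (ENNReal.ofReal (u x ^ 2 / w n α x))
    rw [mul_add (ENNReal.ofReal (u x ^ 2 / w n α x)), mul_add (ENNReal.ofReal (u x ^ 2 / w n α x)),
      ← ENNReal.ofReal_mul (by positivity), ← ENNReal.ofReal_mul (by positivity),
      mul_left_comm _ (2 : ℝ≥0∞), mul_left_comm _ (2 : ℝ≥0∞),
      ← mul_assoc (ENNReal.ofReal (u x ^ 2 / w n α x)) (ENNReal.ofReal _),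
      ← ENNReal.ofReal_mul (by positivity)] at key
    have a1 : u x ^ 2 / w n α x * (1 - ‖x‖ ^ 2) ^ ((α - 1) / 2) = u x ^ 2 := by
      change _ / w n α x * w n α x = _
      field_simp
    rw [a1] at key
    rw [← ENNReal.ofReal_mul hδ, ← he]
    refine le_trans (le_of_eq ?_) (key.trans (le_of_eq ?_))
    · congr 2
      simp only [hQ]
      ring
    · congr 2
      ring
  have h2C : 2 * C2 ≠ ⊤ := ENNReal.mul_ne_top ENNReal.ofNat_ne_top hC2fin
  refine (ENNReal.add_le_add_iff_left h2C).1 ?_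
  calc _ = Bt + (2 * C2 + (∫⁻ x in ball (0 : EuclideanSpace ℝ (Fin n)) 1, ENNReal.ofReal
        (u x ^ 2 * (1 - ‖x‖ ^ 2) ^ (-α) / α * Q (1 - ‖x‖ ^ 2)))) := by
        simp only [hQ]; ring
    _ ≤ _ := add_le_add le_rfl hmain
    _ = _ := by rw [← add_assoc, ← hid]; ring

theorem tSet_mem_eventually {n : ℕ} (x y : EuclideanSpace ℝ (Fin n)) (hx : ‖x‖ < 1) (hy : ‖y‖ < 1)
    (hxy : x ≠ y) : ∀ᶠ k : ℕ in atTop, (x, y) ∈ tSet n (1 / ((k : ℝ) + 2)) := by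
  have hDx : 0 < 1 - ‖x‖ ^ 2 := by nlinarith [norm_nonneg x]
  have hlt : (1 - ‖x‖ ^ 2) * (1 - ‖y‖ ^ 2) < (1 - 0 ^ 2) * (1 - inner ℝ x y) ^ 2 := by
    obtain ⟨z, rfl⟩ : ∃ z, y = x + z := ⟨y - x, by abel⟩
    have hz : z ≠ 0 := by rintro rfl; simp at hxy
    have hz2 : 0 < ‖z‖ ^ 2 := by positivity
    rw [norm_add_sq_real, inner_add_right, real_inner_self_eq_norm_sq]
    nlinarith [mul_pos hDx hz2, sq_nonneg (inner ℝ x z : ℝ)]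
  have ht : Tendsto (fun k : ℕ => (1 / ((k : ℝ) + 2))) atTop (𝓝 0) := by
    have := tendsto_one_div_add_atTop_nhds_zero_nat (𝕜 := ℝ)
    have := this.comp (tendsto_add_atTop_nat 1)
    refine this.congr fun k => ?_
    simp only [Function.comp_apply]
    push_cast
    rw [add_assoc]; norm_num
  have ht2 : Tendsto (fun k : ℕ => (1 - (1 / ((k : ℝ) + 2)) ^ 2) * (1 - inner ℝ x y) ^ 2) atTop
      (𝓝 ((1 - 0 ^ 2) * (1 - inner ℝ x y) ^ 2)) := ((ht.pow 2).const_sub 1).mul_const _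
  filter_upwards [ht2.eventually (lt_mem_nhds hlt)] with k hk
  exact mem_tSet.2 ⟨hx, hy, hk⟩

theorem tSet_mono {n : ℕ} : Monotone (fun k : ℕ => tSet n (1 / ((k : ℝ) + 2))) := by
  intro k l hkl p hp
  obtain ⟨a, b, c⟩ := mem_tSet.1 hp
  refine mem_tSet.2 ⟨a, b, c.trans_le ?_⟩
  apply mul_le_mul_of_nonneg_right _ (sq_nonneg _)
  have : (k : ℝ) ≤ l := by exact_mod_cast hkl
  gcongr

theorem lint_tSet_tendsto {n : ℕ}
    (F : EuclideanSpace ℝ (Fin n) × EuclideanSpace ℝ (Fin n) → ℝ≥0∞) (hF : Measurable F)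
    (hd : ∀ x, F (x, x) = 0) :
    Tendsto (fun k : ℕ => ∫⁻ p in tSet n (1 / ((k : ℝ) + 2)), F p) atTop
      (𝓝 (∫⁻ x in ball (0 : EuclideanSpace ℝ (Fin n)) 1,
        ∫⁻ y in ball (0 : EuclideanSpace ℝ (Fin n)) 1, F (x, y))) := by
  set P := ball (0 : EuclideanSpace ℝ (Fin n)) 1 ×ˢ ball (0 : EuclideanSpace ℝ (Fin n)) 1
  have hP : MeasurableSet P := measurableSet_ball.prod measurableSet_ball
  have e : (∫⁻ x in ball (0 : EuclideanSpace ℝ (Fin n)) 1,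
        ∫⁻ y in ball (0 : EuclideanSpace ℝ (Fin n)) 1, F (x, y)) = ∫⁻ p, P.indicator F p := by
    rw [lintegral_indicator hP, Measure.volume_eq_prod, ← Measure.prod_restrict,
      lintegral_prod _ hF.aemeasurable]
  rw [e]
  simp_rw [← lintegral_indicator (tSet_meas n _)]
  apply lintegral_tendsto_of_tendsto_of_monotone
  · exact fun k => (hF.indicator (tSet_meas n _)).aemeasurable
  · refine Eventually.of_forall fun p k l hkl => ?_
    exact indicator_le_indicator_of_subset (tSet_mono hkl) (fun _ => zero_le) p
  · refine Eventually.of_forall fun p => ?_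
    apply tendsto_const_nhds.congr'
    by_cases hp : p ∈ P
    · by_cases hxy : p.1 = p.2
      · have : F p = 0 := by
          have := hd p.1
          nth_rewrite 2 [hxy] at this
          exact this
        refine Eventually.of_forall fun k => ?_
        beta_reduce
        rw [indicator_of_mem hp, this]
        by_cases hk : p ∈ tSet n (1 / ((k : ℝ) + 2))
        · rw [indicator_of_mem hk, this]
        · rw [indicator_of_notMem hk]
      · filter_upwards [tSet_mem_eventually p.1 p.2 (by simpa using hp.1) (by simpa using hp.2) hxy]
          with k hk
        rw [indicator_of_mem hp, indicator_of_mem hk]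
    · refine Eventually.of_forall fun k => ?_
      beta_reduce
      rw [indicator_of_notMem hp, indicator_of_notMem]
      intro h
      obtain ⟨a, b, c⟩ := mem_tSet.1 h
      exact hp ⟨by simpa using a, by simpa using b⟩

theorem full_ineq {n : ℕ} (hn : 2 ≤ n) {α : ℝ} (h1 : 1 < α) (h2 : α < 2)
    (u : EuclideanSpace ℝ (Fin n) → ℝ) (hu : Continuous u)
    (hc : HasCompactSupport u) (hs : tsupport u ⊆ ball (0 : EuclideanSpace ℝ (Fin n)) 1) :
    (∫⁻ x in ball (0 : EuclideanSpace ℝ (Fin n)) 1,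
            ∫⁻ y in ball (0 : EuclideanSpace ℝ (Fin n)) 1,
              ENNReal.ofReal ((u x / w n α x - u y / w n α y) ^ 2 *
                (w n α x * w n α y) / ‖x - y‖ ^ ((n : ℝ) + α))) +
      (∫⁻ x in ball (0 : EuclideanSpace ℝ (Fin n)) 1, ENNReal.ofReal
        (u x ^ 2 * (1 - ‖x‖ ^ 2) ^ (-α) / α *
        ((eulerBeta ((1 + α) / 2) ((2 - α) / 2) - 2 ^ α) *
          (2 * (Real.pi ^ (((n : ℝ) - 1) / 2) * (Real.Gamma ((1 + α) / 2) / Real.Gamma ((n + α) / 2)))) +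
          (2 ^ α - 2) / 2 * (1 - ‖x‖ ^ 2) *
            (volume : Measure (EuclideanSpace ℝ (Fin n))).toSphere.real univ))) ≤
    ∫⁻ x in ball (0 : EuclideanSpace ℝ (Fin n)) 1,
            ∫⁻ y in ball (0 : EuclideanSpace ℝ (Fin n)) 1,
              ENNReal.ofReal ((u x - u y) ^ 2 / ‖x - y‖ ^ ((n : ℝ) + α)) := by
  have hw : Measurable (w n α) := by unfold w; fun_prop
  have hum : Measurable u := hu.measurable
  have tB := lint_tSet_tendsto (n := n) (fun p =>
      ENNReal.ofReal ((u p.1 / w n α p.1 - u p.2 / w n α p.2) ^ 2 *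
                (w n α p.1 * w n α p.2) / ‖p.1 - p.2‖ ^ ((n : ℝ) + α))) (by fun_prop) (by simp)
  have tA := lint_tSet_tendsto (n := n) (fun p =>
      ENNReal.ofReal ((u p.1 - u p.2) ^ 2 / ‖p.1 - p.2‖ ^ ((n : ℝ) + α))) (by fun_prop) (by simp)
  set F := ∫⁻ x in ball (0 : EuclideanSpace ℝ (Fin n)) 1, ENNReal.ofReal
        (u x ^ 2 * (1 - ‖x‖ ^ 2) ^ (-α) / α *
          (volume : Measure (EuclideanSpace ℝ (Fin n))).toSphere.real univ) with hF
  have hFfin : F ≠ ⊤ :=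
    ((((weight_integrable (-α) u hu hc hs).integrableOn.div_const _).mul_const _).lintegral_lt_top).ne
  have tδ : Tendsto (fun k : ℕ => ENNReal.ofReal (deltaEps α (1 / ((k : ℝ) + 2))) * F) atTop (𝓝 0) := by
    have := ENNReal.tendsto_ofReal (deltaEps_tendsto h1 h2)
    have := ENNReal.Tendsto.mul_const (b := F) this (Or.inr hFfin)
    simpa using this
  have := le_of_tendsto_of_tendsto' (tB.add_const _) (tA.add tδ) (fun k =>
    trunc_ineq hn h1 h2 (ε := 1 / ((k : ℝ) + 2)) (by positivity) (by
      rw [div_lt_one (by positivity)]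
      have : (0 : ℝ) ≤ k := Nat.cast_nonneg k
      linarith) u hu hc hs)
  rw [add_zero] at this
  exact this

/-- Ground-state substitution Hardy inequality with remainder on the unit ball. -/
theorem hardy_with_remainder_ball (n : ℕ) (hn : 2 ≤ n) (α : ℝ)
    (hα1 : 1 < α) (hα2 : α < 2) :
    ∃ c₃ : ℝ, 0 < c₃ ∧ ∀ u : EuclideanSpace ℝ (Fin n) → ℝ,
      Continuous u → HasCompactSupport u →
      tsupport u ⊆ ball (0 : EuclideanSpace ℝ (Fin n)) 1 →
      energy n α (ball 0 1) u ≥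
        (1 / 2 : ℝ≥0∞) * (∫⁻ x in ball (0 : EuclideanSpace ℝ (Fin n)) 1,
            ∫⁻ y in ball (0 : EuclideanSpace ℝ (Fin n)) 1,
              ENNReal.ofReal ((u x / w n α x - u y / w n α y) ^ 2 *
                (w n α x * w n α y) / ‖x - y‖ ^ ((n : ℝ) + α))) +
        ENNReal.ofReal ((2 : ℝ) ^ α * kappa n α *
          ∫ x in ball (0 : EuclideanSpace ℝ (Fin n)) 1,
            (u x) ^ 2 * (1 - ‖x‖ ^ 2) ^ (-α)) +
        ENNReal.ofReal (c₃ *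
          ∫ x in ball (0 : EuclideanSpace ℝ (Fin n)) 1,
            (u x) ^ 2 * (1 - ‖x‖ ^ 2) ^ (-α + 1)) := by
  have : Nonempty (Fin n) := ⟨⟨0, by omega⟩⟩
  have hS : 0 < (volume : Measure (EuclideanSpace ℝ (Fin n))).toSphere.real univ := by
    rw [measureReal_def, ENNReal.toReal_pos_iff]
    refine ⟨?_, measure_lt_top _ _⟩
    rw [Measure.measure_univ_pos]
    exact Measure.toSphere_ne_zero _
  have h2α : (0:ℝ) < 2 ^ α - 2 := by
    have := Real.rpow_lt_rpow_of_exponent_lt (by norm_num : (1:ℝ) < 2) hα1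
    rw [Real.rpow_one] at this; linarith
  have hβ : 0 ≤ eulerBeta ((1 + α) / 2) ((2 - α) / 2) - 2 ^ α :=
    sub_nonneg.2 (two_rpow_le_beta hα1 hα2)
  refine ⟨(2 ^ α - 2) * (volume : Measure (EuclideanSpace ℝ (Fin n))).toSphere.real univ / (4 * α),
    by positivity, ?_⟩
  intro u hu hc hs
  have key := full_ineq hn hα1 hα2 u hu hc hs
  set S := (volume : Measure (EuclideanSpace ℝ (Fin n))).toSphere.real univ
  have hG : 0 < Real.Gamma ((n + α) / 2) := Real.Gamma_pos_of_pos (by positivity)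
  have hG1 : 0 < Real.Gamma ((1 + α) / 2) := Real.Gamma_pos_of_pos (by positivity)
  have i1 := (weight_integrable (-α) u hu hc hs).integrableOn (s := ball 0 1)
  have i2 := (weight_integrable (-α + 1) u hu hc hs).integrableOn (s := ball 0 1)
  have hκ : 0 ≤ kappa n α := by unfold kappa; positivity
  have hc3 : 0 ≤ (2 ^ α - 2) * S / (4 * α) := by positivity
  have hpos : ∀ a : ℝ, ∀ x ∈ ball (0 : EuclideanSpace ℝ (Fin n)) 1,
      0 ≤ u x ^ 2 * (1 - ‖x‖ ^ 2) ^ a := by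
    intro a x hx
    have hx1 : ‖x‖ < 1 := by simpa using hx
    have hDx : 0 < 1 - ‖x‖ ^ 2 := by nlinarith [norm_nonneg x]
    positivity
  have hP : ∫⁻ x in ball (0 : EuclideanSpace ℝ (Fin n)) 1, ENNReal.ofReal
        (u x ^ 2 * (1 - ‖x‖ ^ 2) ^ (-α) / α *
        ((eulerBeta ((1 + α) / 2) ((2 - α) / 2) - 2 ^ α) *
          (2 * (Real.pi ^ (((n : ℝ) - 1) / 2) * (Real.Gamma ((1 + α) / 2) / Real.Gamma ((n + α) / 2)))) +
          (2 ^ α - 2) / 2 * (1 - ‖x‖ ^ 2) * S)) =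
      2 * (ENNReal.ofReal ((2 : ℝ) ^ α * kappa n α *
          ∫ x in ball (0 : EuclideanSpace ℝ (Fin n)) 1, (u x) ^ 2 * (1 - ‖x‖ ^ 2) ^ (-α)) +
        ENNReal.ofReal ((2 ^ α - 2) * S / (4 * α) *
          ∫ x in ball (0 : EuclideanSpace ℝ (Fin n)) 1, (u x) ^ 2 * (1 - ‖x‖ ^ 2) ^ (-α + 1))) := by
    have n1 : 0 ≤ ∫ x in ball (0 : EuclideanSpace ℝ (Fin n)) 1, (u x) ^ 2 * (1 - ‖x‖ ^ 2) ^ (-α) :=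
      setIntegral_nonneg measurableSet_ball (hpos _)
    have n2 : 0 ≤ ∫ x in ball (0 : EuclideanSpace ℝ (Fin n)) 1, (u x) ^ 2 * (1 - ‖x‖ ^ 2) ^ (-α + 1) :=
      setIntegral_nonneg measurableSet_ball (hpos _)
    rw [← ENNReal.ofReal_add (by positivity) (by positivity), ← integral_const_mul,
      ← integral_const_mul, ← integral_add (i1.const_mul _) (i2.const_mul _),
      show ∀ a : ℝ, 2 * ENNReal.ofReal a = ENNReal.ofReal (2 * a) from fun a => by
        rw [ENNReal.ofReal_mul (by norm_num)]; simp,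
      ← integral_const_mul, ofReal_integral_eq_lintegral_ofReal]
    · apply setLIntegral_congr_fun measurableSet_ball
      intro x hx
      have hx1 : ‖x‖ < 1 := by simpa using hx
      have hDx : 0 < 1 - ‖x‖ ^ 2 := by nlinarith [norm_nonneg x]
      simp only
      congr 1
      rw [Real.rpow_add hDx, Real.rpow_one, kappa]
      have h2p : (0:ℝ) < 2 ^ α := by positivity
      field_simp
      ring
    · exact ((i1.const_mul _).add (i2.const_mul _)).const_mul _
    · refine (ae_restrict_iff' measurableSet_ball).2 (Eventually.of_forall fun x hx => ?_)
      have a := hpos (-α) x hx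
      have b := hpos (-α + 1) x hx
      simp only [Pi.zero_apply]
      positivity
  rw [hP] at key
  rw [ge_iff_le, energy, add_assoc]
  refine le_trans (le_of_eq ?_) (mul_le_mul_right key _)
  rw [mul_add, ← mul_assoc (1 / 2 : ℝ≥0∞) 2, one_div,
    ENNReal.inv_mul_cancel (by norm_num) (by norm_num), one_mul]
end

section
/- Let $1<\alpha<2$, $n\geq 2$, $0\leq x<1$, and $h\in S^{n-1}$ with last coordinate $h_n$. With $\mathbf{x}=(0,\ldots,0,x)$, $p=\frac{\alpha-1}{2}$, and $g(x,h):=\mathrm{p.v.}\int_{-xh_n-\sqrt{x^2h_n^2-x^2+1}}^{-xh_n+\sqrt{x^2h_n^2-x^2+1}} \frac{(1-|\mathbf{x}|^2)^p - (1-|\mathbf{x}+th|^2)^p}{|t|^{1+\alpha}}\,dt$, one has $g(x,h) \geq c_1\,|h_n|^{\alpha}\,(1-x^2)^{-\frac{\alpha+1}{2}} + c_2\,(1-x^2)^{-\frac{\alpha-1}{2}}$, where $c_1=\frac{B(\frac{\alpha+1}{2},\frac{2-\alpha}{2})-2^{\alpha}}{\alpha}$ and $c_2=\frac{2^{\alpha}-2}{\alpha}$.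 -/
open MeasureTheory Metric Set Filter
open scoped ENNReal Topology

lemma two_rpow_le_eulerBeta (α : ℝ) (hα1 : 1 < α) (hα2 : α < 2) :
    (2:ℝ) ^ α ≤ eulerBeta ((α + 1) / 2) ((2 - α) / 2) := by
  obtain ⟨p, rfl⟩ : ∃ p, α = 1 + 2 * p := ⟨(α - 1) / 2, by ring⟩
  have hp0 : 0 < p := by linarith
  have hp1 : p < 1 / 2 := by linarith
  have e1 : (1 + 2 * p + 1) / 2 = 1 + p := by ring
  have e2 : (2 - (1 + 2 * p)) / 2 = 1 / 2 - p := by ring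
  have e3 : (1 + p) + (1 / 2 - p) = 1 / 2 + 1 := by ring
  rw [e1, e2, eulerBeta, e3, Real.Gamma_add_one (by norm_num), Real.Gamma_one_half_eq]
  have g1 : 0 < Real.Gamma (1 + p) := Real.Gamma_pos_of_pos (by linarith)
  have g2 : 0 < Real.Gamma (1 - 2 * p) := Real.Gamma_pos_of_pos (by linarith)
  have g3 : 0 < Real.Gamma (1 - p) := Real.Gamma_pos_of_pos (by linarith)
  have g4 : 0 < Real.Gamma (1 / 2 - p) := Real.Gamma_pos_of_pos (by linarith)
  have dup := Real.Gamma_mul_Gamma_add_half (1 / 2 - p)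
  rw [show 1 / 2 - p + 1 / 2 = 1 - p by ring, show 2 * (1 / 2 - p) = 1 - 2 * p by ring,
    show 1 - (1 - 2 * p) = 2 * p by ring] at dup
  have cv := Real.convexOn_log_Gamma
  have c1 := cv.2 (x := 1 - 2 * p) (y := 1 + p) (by simp; linarith) (by simp; linarith)
    (show (0:ℝ) ≤ 2 / 3 by norm_num) (show (0:ℝ) ≤ 1 / 3 by norm_num) (by norm_num)
  have c2 := cv.2 (x := 1 - 2 * p) (y := 1 + p) (by simp; linarith) (by simp; linarith)
    (show (0:ℝ) ≤ 1 / 3 by norm_num) (show (0:ℝ) ≤ 2 / 3 by norm_num) (by norm_num)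
  simp only [smul_eq_mul, Function.comp] at c1 c2
  rw [show 2 / 3 * (1 - 2 * p) + 1 / 3 * (1 + p) = 1 - p by ring] at c1
  rw [show 1 / 3 * (1 - 2 * p) + 2 / 3 * (1 + p) = 1 by ring, Real.Gamma_one, Real.log_one] at c2
  have key : Real.Gamma (1 - p) ≤ Real.Gamma (1 - 2 * p) * Real.Gamma (1 + p) := by
    rw [← Real.log_le_log_iff g3 (mul_pos g2 g1), Real.log_mul g2.ne' g1.ne']
    linarith
  have hs : 0 < Real.sqrt Real.pi := Real.sqrt_pos.mpr Real.pi_pos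
  rw [le_div_iff₀ (by positivity), Real.rpow_add (by norm_num), Real.rpow_one]
  have h2 : (0:ℝ) < 2 ^ (2 * p) := by positivity
  refine le_of_mul_le_mul_right ?_ g3
  calc 2 * 2 ^ (2 * p) * (1 / 2 * Real.sqrt Real.pi) * Real.Gamma (1 - p)
      = 2 ^ (2 * p) * Real.sqrt Real.pi * Real.Gamma (1 - p) := by ring
    _ ≤ 2 ^ (2 * p) * Real.sqrt Real.pi * (Real.Gamma (1 - 2 * p) * Real.Gamma (1 + p)) := by
        gcongr
    _ = Real.Gamma (1 + p) * (Real.Gamma (1 - 2 * p) * 2 ^ (2 * p) * Real.sqrt Real.pi) := by ring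
    _ = _ := by rw [← dup]; ring

lemma kfun_convex (q : ℝ) (hq0 : 0 < q) (hq1 : q < 1) :
    ConvexOn ℝ (Icc 0 1) (fun y : ℝ => (1 + y) ^ q - (1 - y) ^ q) := by
  have hd : ∀ y ∈ Ioo (0:ℝ) 1, HasDerivAt (fun y : ℝ => (1 + y) ^ q - (1 - y) ^ q)
      (q * ((1 + y) ^ (q - 1) + (1 - y) ^ (q - 1))) y := by
    intro y hy
    have h1 := ((hasDerivAt_id y).const_add 1).rpow_const (p := q) (Or.inl (by simp; linarith [hy.1]))
    have h2 := ((hasDerivAt_id y).const_sub 1).rpow_const (p := q) (Or.inl (by simp; linarith [hy.2]))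
    convert! h1.sub h2 using 1
    simp; ring
  have hd2 : ∀ y ∈ Ioo (0:ℝ) 1, HasDerivAt (fun y : ℝ => q * ((1 + y) ^ (q - 1) + (1 - y) ^ (q - 1)))
      (q * (q - 1) * ((1 + y) ^ (q - 2) - (1 - y) ^ (q - 2))) y := by
    intro y hy
    have h1 := ((hasDerivAt_id y).const_add 1).rpow_const (p := q - 1)
      (Or.inl (by simp; linarith [hy.1]))
    have h2 := ((hasDerivAt_id y).const_sub 1).rpow_const (p := q - 1)
      (Or.inl (by simp; linarith [hy.2]))
    convert! (h1.add h2).const_mul q using 1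
    rw [show q - 1 - 1 = q - 2 by ring]
    simp; ring
  refine MonotoneOn.convexOn_of_deriv (convex_Icc 0 1) ?_ ?_ ?_
  · apply ContinuousOn.sub
    · exact (continuousOn_const.add continuousOn_id).rpow_const (fun _ _ => Or.inr hq0.le)
    · exact (continuousOn_const.sub continuousOn_id).rpow_const (fun _ _ => Or.inr hq0.le)
  · rw [interior_Icc]
    exact fun y hy => (hd y hy).differentiableAt.differentiableWithinAt
  · rw [interior_Icc]
    have : MonotoneOn (fun y : ℝ => q * ((1 + y) ^ (q - 1) + (1 - y) ^ (q - 1))) (Ioo 0 1) := by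
      apply monotoneOn_of_hasDerivWithinAt_nonneg (convex_Ioo 0 1)
        (f' := fun y => q * (q - 1) * ((1 + y) ^ (q - 2) - (1 - y) ^ (q - 2)))
      · exact fun y hy => (hd2 y hy).continuousAt.continuousWithinAt
      · rw [interior_Ioo]
        exact fun y hy => (hd2 y hy).hasDerivWithinAt
      · rw [interior_Ioo]
        intro y hy
        have := Real.rpow_le_rpow_of_nonpos (x := 1 - y) (y := 1 + y) (z := q - 2)
          (by linarith [hy.2]) (by linarith [hy.1]) (by linarith)
        apply mul_nonneg_of_nonpos_of_nonpos
        · nlinarith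
        · linarith
    intro a ha b hb hab
    rw [(hd a ha).deriv, (hd b hb).deriv]
    exact this ha hb hab

lemma chord_bound (α : ℝ) (hα1 : 1 < α) (hα2 : α < 2) (y : ℝ) (hy0 : 0 ≤ y) (hy1 : y ≤ 1) :
    (1 + y) ^ α + (1 - y) ^ α ≤ 2 + ((2:ℝ) ^ α - 2) * y ^ 2 := by
  set k : ℝ → ℝ := fun y => (1 + y) ^ (α - 1) - (1 - y) ^ (α - 1) with hk
  have kc : ConvexOn ℝ (Icc 0 1) k := kfun_convex (α - 1) (by linarith) (by linarith)
  have k0 : k 0 = 0 := by simp [hk]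
  set m : ℝ := (2:ℝ) ^ α - 2
  set N : ℝ → ℝ := fun y => 2 + m * y ^ 2 - ((1 + y) ^ α + (1 - y) ^ α) with hN
  have N0 : N 0 = 0 := by simp [hN]; norm_num
  have N1 : N 1 = 0 := by
    simp only [hN, m, sub_self]
    rw [Real.zero_rpow (by linarith)]; norm_num
  have hd : ∀ z ∈ Icc (0:ℝ) 1, HasDerivAt N (2 * m * z - α * k z) z := by
    intro z hz
    have h1 := ((hasDerivAt_id z).const_add 1).rpow_const (p := α) (Or.inr hα1.le)
    have h2 := ((hasDerivAt_id z).const_sub 1).rpow_const (p := α) (Or.inr hα1.le)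
    have h3 := ((hasDerivAt_pow 2 z).const_mul m).const_add 2
    convert! h3.sub (h1.add h2) using 1
    simp [hk]; ring
  have kscale : ∀ a b : ℝ, 0 ≤ a → a ≤ b → 0 < b → b ≤ 1 → k a * b ≤ a * k b := by
    intro a b ha hab hb hb1
    have := kc.2 (show (0:ℝ) ∈ Icc (0:ℝ) 1 by simp) (show b ∈ Icc (0:ℝ) 1 from ⟨hb.le, hb1⟩)
      (show 0 ≤ 1 - a / b by rw [sub_nonneg, div_le_one hb]; exact hab) (show 0 ≤ a / b by positivity) (by ring)
    simp only [smul_eq_mul, k0, mul_zero, zero_add] at this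
    rw [div_mul_cancel₀ _ hb.ne'] at this
    rw [div_mul_eq_mul_div, le_div_iff₀ hb] at this
    exact this
  suffices 0 ≤ N y by simp only [hN] at this; linarith
  rcases hy0.eq_or_lt with h0 | h0
  · rw [← h0, N0]
  by_cases hs : 0 ≤ 2 * m * y - α * k y
  · have : MonotoneOn N (Icc 0 y) := by
      apply monotoneOn_of_hasDerivWithinAt_nonneg (convex_Icc 0 y)
        (f' := fun z => 2 * m * z - α * k z)
      · exact fun z hz => (hd z ⟨hz.1, hz.2.trans hy1⟩).continuousAt.continuousWithinAt
      · intro z hz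
        rw [interior_Icc] at hz
        exact (hd z ⟨hz.1.le, hz.2.le.trans hy1⟩).hasDerivWithinAt
      · intro z hz
        rw [interior_Icc] at hz
        have := kscale z y hz.1.le hz.2.le h0 hy1
        have h5 : 0 ≤ (2 * m * z - α * k z) * y := by nlinarith [hz.1]
        exact nonneg_of_mul_nonneg_left h5 h0
    have := this ⟨le_rfl, hy0⟩ ⟨hy0, le_rfl⟩ hy0
    rwa [N0] at this
  · push Not at hs
    have : AntitoneOn N (Icc y 1) := by
      apply antitoneOn_of_hasDerivWithinAt_nonpos (convex_Icc y 1)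
        (f' := fun z => 2 * m * z - α * k z)
      · exact fun z hz => (hd z ⟨hy0.trans hz.1, hz.2⟩).continuousAt.continuousWithinAt
      · intro z hz
        rw [interior_Icc] at hz
        exact (hd z ⟨hy0.trans hz.1.le, hz.2.le⟩).hasDerivWithinAt
      · intro z hz
        rw [interior_Icc] at hz
        have hz0 : 0 < z := h0.trans hz.1
        have := kscale y z hy0 hz.1.le hz0 hz.2.le
        have h5 : (2 * m * z - α * k z) * y ≤ 0 := by nlinarith
        by_contra hc
        push Not at hc
        nlinarith [mul_pos hc h0]
    have := this ⟨le_rfl, hy1⟩ ⟨hy1, le_rfl⟩ hy1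
    rwa [N1] at this

lemma beta_real_integral (a b : ℝ) (ha : 0 < a) (hb : 0 < b) :
    IntervalIntegrable (fun v : ℝ => v ^ (a - 1) * (1 - v) ^ (b - 1)) volume 0 1 ∧
      ∫ v in (0:ℝ)..1, v ^ (a - 1) * (1 - v) ^ (b - 1) = eulerBeta a b := by
  have hc := Complex.betaIntegral_convergent (u := (a:ℂ)) (v := (b:ℂ)) (by simpa) (by simpa)
  have he : ∀ v ∈ Ioc (0:ℝ) 1, ((v:ℂ) ^ ((a:ℂ) - 1) * (1 - (v:ℂ)) ^ ((b:ℂ) - 1)) =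
      ((v ^ (a - 1) * (1 - v) ^ (b - 1) : ℝ) : ℂ) := by
    intro v hv
    push_cast
    rw [Complex.ofReal_cpow hv.1.le, Complex.ofReal_cpow (by linarith [hv.2])]
    push_cast; rfl
  have hi : IntervalIntegrable (fun v : ℝ => v ^ (a - 1) * (1 - v) ^ (b - 1)) volume 0 1 := by
    rw [intervalIntegrable_iff_integrableOn_Ioc_of_le zero_le_one] at hc ⊢
    have := (hc.congr_fun he measurableSet_Ioc).re
    simpa [IntegrableOn] using this
  refine ⟨hi, ?_⟩
  have hB := ProbabilityTheory.beta_eq_betaIntegralReal a b ha hb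
  rw [show eulerBeta a b = ProbabilityTheory.beta a b from rfl, hB, Complex.betaIntegral,
    intervalIntegral.integral_of_le zero_le_one, intervalIntegral.integral_of_le zero_le_one,
    setIntegral_congr_fun measurableSet_Ioc he, integral_complex_ofReal]
  simp

lemma kappa_integral (α : ℝ) (hα1 : 1 < α) (hα2 : α < 2) :
    IntegrableOn (fun v : ℝ => (1 - (1 - v) ^ ((α - 1) / 2)) * v ^ (-1 - α / 2)) (Ioo 0 1) ∧
      ∫ v in Ioo (0:ℝ) 1, (1 - (1 - v) ^ ((α - 1) / 2)) * v ^ (-1 - α / 2) =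
        (eulerBeta ((α + 1) / 2) ((2 - α) / 2) - 2) / α := by
  set p := (α - 1) / 2 with hp
  have hp0 : 0 < p := by simp only [hp]; linarith
  have hp1 : p < 1 / 2 := by simp only [hp]; linarith
  obtain ⟨bi, bv⟩ := beta_real_integral ((2 - α) / 2) p (by linarith) hp0
  rw [show (2 - α) / 2 - 1 = -(α / 2) by ring] at bi bv
  have bnd : ∀ v ∈ Ioo (0:ℝ) 1, 0 ≤ 1 - (1 - v) ^ p ∧ 1 - (1 - v) ^ p ≤ v := by
    intro v hv
    have h1 := Real.rpow_le_one (x := 1 - v) (z := p) (by linarith [hv.2]) (by linarith [hv.1]) hp0.le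
    have h2 := Real.rpow_le_rpow_of_exponent_ge (x := 1 - v) (by linarith [hv.2]) (by linarith [hv.1])
      (show p ≤ 1 by linarith)
    rw [Real.rpow_one] at h2
    constructor <;> linarith
  have hpow : ∀ v : ℝ, 0 < v → v * v ^ (-1 - α / 2) = v ^ (-(α / 2)) := by
    intro v hv
    rw [← Real.rpow_one_add' hv.le (by linarith)]
    congr 1; ring
  have hint : IntegrableOn (fun v : ℝ => (1 - (1 - v) ^ p) * v ^ (-1 - α / 2)) (Ioo 0 1) := by
    have hI : IntegrableOn (fun v : ℝ => v ^ (-(α / 2))) (Ioo 0 1) := by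
      have := intervalIntegral.intervalIntegrable_rpow' (a := 0) (b := 1) (r := -(α / 2))
        (by linarith)
      rw [intervalIntegrable_iff_integrableOn_Ioo_of_le zero_le_one] at this
      exact this
    refine Integrable.mono' hI ?_ ?_
    · apply Measurable.aestronglyMeasurable
      fun_prop
    · rw [ae_restrict_iff' measurableSet_Ioo]
      refine ae_of_all _ fun v hv => ?_
      have := bnd v hv
      have h3 : 0 ≤ v ^ (-1 - α / 2) := Real.rpow_nonneg hv.1.le _
      rw [Real.norm_of_nonneg (mul_nonneg this.1 h3), ← hpow v hv.1]
      exact mul_le_mul_of_nonneg_right this.2 h3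
  refine ⟨hint, ?_⟩
  have hii : IntervalIntegrable (fun v : ℝ => (1 - (1 - v) ^ p) * v ^ (-1 - α / 2)) volume 0 1 := by
    rw [intervalIntegrable_iff_integrableOn_Ioo_of_le zero_le_one]; exact hint
  have ftc := intervalIntegral.integral_eq_sub_of_hasDerivAt_of_tendsto (a := 0) (b := 1)
    (f := fun v : ℝ => -(2 / α) * ((1 - (1 - v) ^ p) * v ^ (-(α / 2))))
    (f' := fun v => (1 - (1 - v) ^ p) * v ^ (-1 - α / 2) -
      (2 * p / α) * (v ^ (-(α / 2)) * (1 - v) ^ (p - 1))) (fa := 0) (fb := -(2 / α))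
    zero_lt_one ?_ (hii.sub (bi.const_mul _)) ?_ ?_
  · rw [intervalIntegral.integral_sub hii (bi.const_mul _), intervalIntegral.integral_const_mul, bv,
      intervalIntegral.integral_of_le zero_le_one, ← integral_Ioc_eq_integral_Ioo.symm] at ftc
    have hB : eulerBeta ((α + 1) / 2) ((2 - α) / 2) = 2 * p * eulerBeta ((2 - α) / 2) p := by
      unfold eulerBeta
      rw [show (α + 1) / 2 = p + 1 by simp only [hp]; ring,
        show p + 1 + (2 - α) / 2 = 1 / 2 + 1 by simp only [hp]; ring,
        show (2 - α) / 2 + p = 1 / 2 by simp only [hp]; ring,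
        Real.Gamma_add_one hp0.ne', Real.Gamma_add_one (by norm_num)]
      have : Real.Gamma (1 / 2) ≠ 0 := (Real.Gamma_pos_of_pos (by norm_num)).ne'
      field_simp
    rw [hB]
    have : α ≠ 0 := by linarith
    field_simp
    field_simp at ftc
    linarith
  · intro v hv
    have h1 := (((hasDerivAt_id v).const_sub 1).rpow_const (p := p)
      (Or.inl (by simp; linarith [hv.2]))).const_sub 1
    have h2 := Real.hasDerivAt_rpow_const (x := v) (p := -(α / 2)) (Or.inl hv.1.ne')
    convert! (h1.mul h2).const_mul (-(2 / α)) using 1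
    rw [show -(α / 2) - 1 = -1 - α / 2 by ring]
    have : α ≠ 0 := by linarith
    simp
    field_simp
    ring
  · have h0 : Tendsto (fun v : ℝ => v ^ (1 - α / 2)) (𝓝[>] 0) (𝓝 0) := by
      have : ContinuousAt (fun v : ℝ => v ^ (1 - α / 2)) 0 :=
        continuousAt_id.rpow_const (Or.inr (by linarith))
      have h := this.tendsto
      rw [Real.zero_rpow (by linarith)] at h
      exact h.mono_left nhdsWithin_le_nhds
    have : Tendsto (fun v : ℝ => (1 - (1 - v) ^ p) * v ^ (-(α / 2))) (𝓝[>] 0) (𝓝 0) := by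
      refine tendsto_of_tendsto_of_tendsto_of_le_of_le' tendsto_const_nhds h0 ?_ ?_
      · filter_upwards [Ioo_mem_nhdsGT zero_lt_one] with v hv
        exact mul_nonneg (bnd v hv).1 (Real.rpow_nonneg hv.1.le _)
      · filter_upwards [Ioo_mem_nhdsGT zero_lt_one] with v hv
        rw [show 1 - α / 2 = 1 + (-(α / 2)) by ring, Real.rpow_add hv.1, Real.rpow_one]
        exact mul_le_mul_of_nonneg_right (bnd v hv).2 (Real.rpow_nonneg hv.1.le _)
    simpa using this.const_mul (-(2 / α))
  · have : ContinuousAt (fun v : ℝ => -(2 / α) * ((1 - (1 - v) ^ p) * v ^ (-(α / 2)))) 1 := by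
      apply ContinuousAt.mul continuousAt_const
      apply ContinuousAt.mul
      · exact continuousAt_const.sub ((continuousAt_const.sub continuousAt_id).rpow_const
          (Or.inr hp0.le))
      · exact continuousAt_id.rpow_const (Or.inl one_ne_zero)
    have h := this.tendsto
    simp only [sub_self, Real.zero_rpow hp0.ne', Real.one_rpow] at h
    simpa using h.mono_left nhdsWithin_le_nhds

lemma half_facts {D w b : ℝ} (hD : 0 < D) (hw : 0 < w) (hwb : w ^ 2 = D + b ^ 2) :
    0 < w - b ∧ 0 < w + b ∧ D = (w - b) * (w + b) := by
  have : |b| < w := abs_lt_of_sq_lt_sq (by linarith) hw.le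
  rw [abs_lt] at this
  refine ⟨by linarith, by linarith, by linarith⟩

lemma half_F2 (α : ℝ) (hα1 : 1 < α) (hα2 : α < 2) (D w b : ℝ) (hD : 0 < D) (hw : 0 < w)
    (hwb : w ^ 2 = D + b ^ 2) :
    IntegrableOn (fun t : ℝ => ((D - b * t) ^ (α - 1) -
      (D * (D - 2 * b * t - t ^ 2)) ^ ((α - 1) / 2)) * t ^ (-1 - α)) (Ioo 0 (w - b)) ∧
    ∫ t in Ioo 0 (w - b), ((D - b * t) ^ (α - 1) -
      (D * (D - 2 * b * t - t ^ 2)) ^ ((α - 1) / 2)) * t ^ (-1 - α) =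
      w ^ α / (2 * D) * ((eulerBeta ((α + 1) / 2) ((2 - α) / 2) - 2) / α) := by
  obtain ⟨hT, hT', hDD⟩ := half_facts hD hw hwb
  obtain ⟨ki, kv⟩ := kappa_integral α hα1 hα2
  set g : ℝ → ℝ := fun v => (1 - (1 - v) ^ ((α - 1) / 2)) * v ^ (-1 - α / 2) with hg
  have hH : ∀ t ∈ Ioo 0 (w - b), w * t < D - b * t := by
    intro t ht
    nlinarith [ht.1, ht.2]
  have hH0 : ∀ t ∈ Ioo 0 (w - b), 0 < D - b * t := fun t ht =>
    (mul_pos hw ht.1).trans (hH t ht)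
  set φ : ℝ → ℝ := fun t => (w * t / (D - b * t)) ^ 2 with hφ
  set φ' : ℝ → ℝ := fun t => 2 * w ^ 2 * D * t / (D - b * t) ^ 3 with hφ'
  have hder : ∀ t ∈ Ioo 0 (w - b), HasDerivWithinAt φ (φ' t) (Ioo 0 (w - b)) t := by
    intro t ht
    have h0 := (hH0 t ht).ne'
    have h1 := (hasDerivAt_id t).const_mul w
    have h2 := ((hasDerivAt_id t).const_mul b).const_sub D
    have h3 := ((h1.div h2 h0).pow 2).hasDerivWithinAt (s := Ioo 0 (w - b))
    convert! h3 using 1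
    simp [hφ']
    field_simp
    ring
  have hinj : InjOn φ (Ioo 0 (w - b)) := by
    intro s hs t ht hst
    have hs0 := hH0 s hs
    have ht0 := hH0 t ht
    have hs1 := hs.1
    have ht1 := ht.1
    have := (pow_left_inj₀ (by positivity) (by positivity) two_ne_zero).mp hst
    rw [div_eq_div_iff hs0.ne' ht0.ne'] at this
    have h5 : w * D * (s - t) = 0 := by linarith
    have h6 : s - t = 0 := by
      rcases mul_eq_zero.mp h5 with h | h
      · exact absurd h (by positivity)
      · exact h
    linarith
  have himg : φ '' Ioo 0 (w - b) = Ioo 0 1 := by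
    ext v
    constructor
    · rintro ⟨t, ht, rfl⟩
      have ht0 := hH0 t ht
      have ht1 := ht.1
      have : w * t / (D - b * t) < 1 := by rw [div_lt_one ht0]; exact hH t ht
      have h2 : 0 < w * t / (D - b * t) := by positivity
      exact ⟨by positivity, by simp only [hφ]; nlinarith⟩
    · intro hv
      set u := Real.sqrt v with hu
      have hu0 : 0 < u := Real.sqrt_pos.mpr hv.1
      have hu1 : u < 1 := by rw [hu, Real.sqrt_lt' one_pos]; simpa using hv.2
      have hden : 0 < w + u * b := by nlinarith
      refine ⟨D * u / (w + u * b), ⟨by positivity, ?_⟩, ?_⟩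
      · rw [div_lt_iff₀ hden, hDD]
        have : (w + b) * u < w + u * b := by nlinarith
        nlinarith
      · simp only [hφ]
        rw [← Real.sq_sqrt hv.1.le, ← hu]
        congr 1
        have : D - b * (D * u / (w + u * b)) = D * w / (w + u * b) := by
          rw [eq_div_iff hden.ne', sub_mul, mul_assoc b, div_mul_cancel₀ _ hden.ne']
          ring
        rw [this]
        field_simp
  have hcong : ∀ t ∈ Ioo 0 (w - b), |φ' t| • g (φ t) = (2 * D * w ^ (-α)) *
      (((D - b * t) ^ (α - 1) -
      (D * (D - 2 * b * t - t ^ 2)) ^ ((α - 1) / 2)) * t ^ (-1 - α)) := by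
    intro t ht
    have h0 := hH0 t ht
    have ht0 := ht.1
    have hQ : 0 < D - 2 * b * t - t ^ 2 := by
      have : D - 2 * b * t - t ^ 2 = (w - b - t) * (w + b + t) := by rw [hDD]; ring
      rw [this]
      exact mul_pos (by linarith [ht.2]) (by linarith)
    have e1 : 1 - φ t = (D * (D - 2 * b * t - t ^ 2)) / (D - b * t) ^ 2 := by
      simp only [hφ]
      rw [div_pow, mul_pow, hwb]
      field_simp
      ring
    set H := D - b * t with hHdef
    set Q := D - 2 * b * t - t ^ 2 with hQdef
    have hφ'0 : 0 ≤ φ' t := by simp only [hφ']; positivity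
    rw [abs_of_nonneg hφ'0, smul_eq_mul]
    simp only [hg]
    rw [e1, Real.div_rpow (by positivity) (by positivity), ← Real.rpow_natCast H 2,
      ← Real.rpow_mul h0.le]
    have e2 : ((2:ℕ):ℝ) * ((α - 1) / 2) = α - 1 := by push_cast; ring
    rw [e2]
    have e3 : φ t ^ (-1 - α / 2) = w ^ (-α) * t ^ (-1 - α) * H ^ (α - 1) * (H ^ 3 / (w ^ 2 * t)) := by
      simp only [hφ]
      rw [← Real.rpow_natCast (w * t / (D - b * t)) 2, ← Real.rpow_mul (by positivity)]
      have : ((2:ℕ):ℝ) * (-1 - α / 2) = -(2 + α) := by push_cast; ring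
      rw [this, Real.div_rpow (by positivity) h0.le, Real.mul_rpow hw.le ht0.le]
      rw [show -(2 + α) = -α - 2 by ring, Real.rpow_sub hw, Real.rpow_sub ht0, Real.rpow_sub h0,
        Real.rpow_sub ht0, Real.rpow_sub h0, Real.rpow_neg h0.le, Real.rpow_neg ht0.le,
        Real.rpow_neg ht0.le]
      simp only [Real.rpow_one, Real.rpow_ofNat]
      have := Real.rpow_pos_of_pos h0 α
      have := Real.rpow_pos_of_pos ht0 α
      field_simp
    rw [e3]
    simp only [hφ']
    have := Real.rpow_pos_of_pos h0 (α - 1)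
    rw [← hHdef]
    field_simp
  have hwα : 0 < w ^ α := Real.rpow_pos_of_pos hw α
  have hc : (2 * D * w ^ (-α)) ≠ 0 := by positivity
  constructor
  · have h1 := integrableOn_image_iff_integrableOn_abs_deriv_smul measurableSet_Ioo hder hinj g
    rw [himg] at h1
    have h2 := (h1.mp ki).congr_fun hcong measurableSet_Ioo
    have h3 := Integrable.const_mul h2 (2 * D * w ^ (-α))⁻¹
    refine h3.congr (ae_of_all _ fun t => ?_)
    exact inv_mul_cancel_left₀ hc _
  · have h1 := integral_image_eq_integral_abs_deriv_smul measurableSet_Ioo hder hinj g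
    rw [himg, setIntegral_congr_fun measurableSet_Ioo hcong, integral_const_mul, kv] at h1
    rw [h1, Real.rpow_neg hw.le]
    generalize (∫ t in Ioo 0 (w - b), ((D - b * t) ^ (α - 1) -
      (D * (D - 2 * b * t - t ^ 2)) ^ ((α - 1) / 2)) * t ^ (-1 - α)) = I
    field_simp

lemma half_F1 (α : ℝ) (hα1 : 1 < α) (D w b : ℝ) (hD : 0 < D) (hw : 0 < w)
    (hwb : w ^ 2 = D + b ^ 2) (ε : ℝ) (hε : 0 < ε) (hεT : ε < w - b) :
    IntegrableOn (fun t : ℝ => (D ^ (α - 1) - (D - b * t) ^ (α - 1)) * t ^ (-1 - α))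
      (Ioo ε (w - b)) ∧
    ∫ t in Ioo ε (w - b), (D ^ (α - 1) - (D - b * t) ^ (α - 1)) * t ^ (-1 - α) =
      1 / (α * D) * ((w ^ α - (w + b) ^ α) - ((D - b * ε) ^ α - D ^ α) * ε ^ (-α)) := by
  obtain ⟨hT, hT', hDD⟩ := half_facts hD hw hwb
  have hH0 : ∀ t ∈ Icc ε (w - b), 0 < D - b * t := by
    intro t ht
    have ht0 : 0 < t := hε.trans_le ht.1
    have : w * t ≤ D - b * t := by nlinarith [ht.2]
    exact (mul_pos hw ht0).trans_le this
  have hco : ContinuousOn (fun t : ℝ => (D ^ (α - 1) - (D - b * t) ^ (α - 1)) * t ^ (-1 - α))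
      (Icc ε (w - b)) := by
    apply ContinuousOn.mul
    · apply ContinuousOn.sub continuousOn_const
      apply ContinuousOn.rpow_const (by fun_prop)
      exact fun t ht => Or.inr (by linarith)
    · exact continuousOn_id.rpow_const fun t ht => Or.inl (hε.trans_le ht.1).ne'
  refine ⟨(hco.integrableOn_Icc).mono_set Ioo_subset_Icc_self, ?_⟩
  have hii : IntervalIntegrable (fun t : ℝ => (D ^ (α - 1) - (D - b * t) ^ (α - 1)) * t ^ (-1 - α))
      volume ε (w - b) := by
    apply ContinuousOn.intervalIntegrable
    rwa [uIcc_of_le hεT.le]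
  have ftc := intervalIntegral.integral_eq_sub_of_hasDerivAt
    (f := fun t : ℝ => 1 / (α * D) * (((D - b * t) ^ α - D ^ α) * t ^ (-α)))
    (a := ε) (b := w - b) ?_ hii
  · rw [← integral_Ioc_eq_integral_Ioo, ← intervalIntegral.integral_of_le hεT.le, ftc]
    have e1 : D - b * (w - b) = w * (w - b) := by nlinarith
    have e2 : ((D - b * (w - b)) ^ α - D ^ α) * (w - b) ^ (-α) = w ^ α - (w + b) ^ α := by
      have : 0 < (w - b) ^ α := Real.rpow_pos_of_pos hT α
      rw [e1, hDD, Real.mul_rpow hw.le hT.le, Real.mul_rpow hT.le hT'.le, Real.rpow_neg hT.le]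
      field_simp
    rw [e2]
    ring
  · intro t ht
    rw [uIcc_of_le hεT.le] at ht
    have ht0 : 0 < t := hε.trans_le ht.1
    have h0 := hH0 t ht
    have h1 := ((((hasDerivAt_id t).const_mul b).const_sub D).rpow_const (p := α)
      (Or.inr hα1.le)).sub_const (D ^ α)
    have h2 := Real.hasDerivAt_rpow_const (x := t) (p := -α) (Or.inl ht0.ne')
    convert! (h1.mul h2).const_mul (1 / (α * D)) using 1
    have hα : α ≠ 0 := by linarith
    have e1 : t ^ (-α) = t * t ^ (-1 - α) := by
      rw [← Real.rpow_one_add' ht0.le (by linarith)]; congr 1; ring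
    have e2 : ∀ z : ℝ, 0 < z → z ^ α = z * z ^ (α - 1) := by
      intro z hz
      rw [← Real.rpow_one_add' hz.le (by linarith)]; congr 1; ring
    simp only [id, mul_one]
    rw [show -α - 1 = -1 - α by ring, e1, e2 _ hD, e2 _ h0]
    field_simp
    ring

lemma half_limit (α : ℝ) (hα1 : 1 < α) (hα2 : α < 2) (D w b : ℝ) (hD : 0 < D) (hw : 0 < w)
    (hwb : w ^ 2 = D + b ^ 2) :
    Tendsto (fun ε : ℝ => (∫ t in Ioo ε (w - b),
        (D ^ ((α - 1) / 2) - (D - 2 * b * t - t ^ 2) ^ ((α - 1) / 2)) / |t| ^ (1 + α)) +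
        D ^ (-((α - 1) / 2)) / (α * D) * (((D - b * ε) ^ α - D ^ α) * ε ^ (-α)))
      (𝓝[>] 0) (𝓝 (D ^ (-((α - 1) / 2)) / (α * D) * (w ^ α - (w + b) ^ α +
        w ^ α * (eulerBeta ((α + 1) / 2) ((2 - α) / 2) - 2) / 2))) := by
  obtain ⟨hT, hT', hDD⟩ := half_facts hD hw hwb
  obtain ⟨i2, v2⟩ := half_F2 α hα1 hα2 D w b hD hw hwb
  set F2 : ℝ → ℝ := fun t => ((D - b * t) ^ (α - 1) -
      (D * (D - 2 * b * t - t ^ 2)) ^ ((α - 1) / 2)) * t ^ (-1 - α) with hF2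
  have hlim : Tendsto (fun ε : ℝ => ∫ t in Ioo ε (w - b), F2 t) (𝓝[>] 0)
      (𝓝 (∫ t in Ioo 0 (w - b), F2 t)) := by
    have hc := aecover_Ioo_of_Ioo (μ := (volume : Measure ℝ)) (l := 𝓝[>] (0:ℝ)) (A := 0)
      (B := w - b) (a := fun ε : ℝ => ε) (b := fun _ => w - b)
      (tendsto_id.mono_left nhdsWithin_le_nhds) tendsto_const_nhds
    have := hc.integral_tendsto_of_countably_generated i2
    refine this.congr' ?_
    filter_upwards [self_mem_nhdsWithin] with ε hε
    rw [Measure.restrict_restrict measurableSet_Ioo, inter_eq_left.mpr]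
    exact Ioo_subset_Ioo_left (le_of_lt hε)
  rw [v2] at hlim
  have h3 := (hlim.const_mul (D ^ (-((α - 1) / 2)))).const_add
    (D ^ (-((α - 1) / 2)) / (α * D) * (w ^ α - (w + b) ^ α))
  have hα : α ≠ 0 := by linarith
  have e : D ^ (-((α - 1) / 2)) / (α * D) * (w ^ α - (w + b) ^ α +
        w ^ α * (eulerBeta ((α + 1) / 2) ((2 - α) / 2) - 2) / 2) =
      D ^ (-((α - 1) / 2)) / (α * D) * (w ^ α - (w + b) ^ α) + D ^ (-((α - 1) / 2)) *
      (w ^ α / (2 * D) * ((eulerBeta ((α + 1) / 2) ((2 - α) / 2) - 2) / α)) := by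
    field_simp
  rw [e]
  refine h3.congr' ?_
  filter_upwards [Ioo_mem_nhdsGT hT] with ε hε
  obtain ⟨i1, v1⟩ := half_F1 α hα1 D w b hD hw hwb ε hε.1 hε.2
  have i2' : IntegrableOn F2 (Ioo ε (w - b)) := i2.mono_set (Ioo_subset_Ioo_left hε.1.le)
  have hsum : ∫ t in Ioo ε (w - b),
        (D ^ ((α - 1) / 2) - (D - 2 * b * t - t ^ 2) ^ ((α - 1) / 2)) / |t| ^ (1 + α) =
      D ^ (-((α - 1) / 2)) * ((∫ t in Ioo ε (w - b), (D ^ (α - 1) - (D - b * t) ^ (α - 1)) *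
        t ^ (-1 - α)) + ∫ t in Ioo ε (w - b), F2 t) := by
    rw [← integral_add i1 i2', ← integral_const_mul]
    refine setIntegral_congr_fun measurableSet_Ioo fun t ht => ?_
    have ht0 : 0 < t := hε.1.trans ht.1
    have hQ : 0 < D - 2 * b * t - t ^ 2 := by
      have : D - 2 * b * t - t ^ 2 = (w - b - t) * (w + b + t) := by rw [hDD]; ring
      rw [this]
      exact mul_pos (by linarith [ht.2]) (by linarith)
    simp only [hF2]
    rw [abs_of_pos ht0, Real.mul_rpow hD.le hQ.le, show -1 - α = -(1 + α) by ring,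
      Real.rpow_neg ht0.le, Real.rpow_neg hD.le,
      show D ^ (α - 1) = D ^ ((α - 1) / 2) * D ^ ((α - 1) / 2) by
        rw [← Real.rpow_add hD]; congr 1; ring]
    have := Real.rpow_pos_of_pos hD ((α - 1) / 2)
    have := Real.rpow_pos_of_pos ht0 (1 + α)
    field_simp
    ring
  rw [hsum, v1]
  ring

lemma sym_rpow_abs (α D b ε : ℝ) : (D - b * ε) ^ α + (D + b * ε) ^ α =
    (D - |b| * ε) ^ α + (D + |b| * ε) ^ α := by
  rcases abs_choice b with h | h
  · rw [h]
  · rw [h, add_comm]; congr 2 <;> ring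

lemma err_limit (α : ℝ) (hα1 : 1 < α) (hα2 : α < 2) (D b : ℝ) (hD : 0 < D) :
    Tendsto (fun ε : ℝ => ((D - b * ε) ^ α + (D + b * ε) ^ α - 2 * D ^ α) * ε ^ (-α))
      (𝓝[>] 0) (𝓝 0) := by
  have h0 : Tendsto (fun ε : ℝ => (D ^ α * ((2:ℝ) ^ α - 2) * (|b| / D) ^ 2) * ε ^ (2 - α))
      (𝓝[>] 0) (𝓝 0) := by
    have : ContinuousAt (fun ε : ℝ => ε ^ (2 - α)) 0 :=
      continuousAt_id.rpow_const (Or.inr (by linarith))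
    have h := this.tendsto
    rw [Real.zero_rpow (by linarith)] at h
    have := (h.mono_left (nhdsWithin_le_nhds (s := Ioi 0))).const_mul
      (D ^ α * ((2:ℝ) ^ α - 2) * (|b| / D) ^ 2)
    rwa [mul_zero] at this
  have hsmall : ∀ᶠ ε in 𝓝[>] (0:ℝ), |b| / D * ε ≤ 1 := by
    have : Tendsto (fun ε : ℝ => |b| / D * ε) (𝓝 0) (𝓝 (|b| / D * 0)) :=
      tendsto_id.const_mul _
    rw [mul_zero] at this
    exact (this.mono_left nhdsWithin_le_nhds).eventually_le_const zero_lt_one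
  have heq : ∀ ε : ℝ, 0 < ε → |b| / D * ε ≤ 1 →
      (D - b * ε) ^ α + (D + b * ε) ^ α - 2 * D ^ α =
        D ^ α * ((1 + |b| / D * ε) ^ α + (1 - |b| / D * ε) ^ α - 2) := by
    intro ε hε h1
    have hp : 0 ≤ |b| / D * ε := by positivity
    rw [sym_rpow_abs,
      show D - |b| * ε = D * (1 - |b| / D * ε) by field_simp,
      show D + |b| * ε = D * (1 + |b| / D * ε) by field_simp,
      Real.mul_rpow hD.le (by linarith), Real.mul_rpow hD.le (by linarith)]
    ring
  have hDα : 0 < D ^ α := Real.rpow_pos_of_pos hD α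
  refine tendsto_of_tendsto_of_tendsto_of_le_of_le' tendsto_const_nhds h0 ?_ ?_
  · filter_upwards [self_mem_nhdsWithin, hsmall] with ε hε h1
    have hε' : 0 < ε := hε
    rw [heq ε hε h1]
    have hp : 0 ≤ |b| / D * ε := by positivity
    have b1 := one_add_mul_self_le_rpow_one_add (s := |b| / D * ε) (by linarith) hα1.le
    have b2 := one_add_mul_self_le_rpow_one_add (s := -(|b| / D * ε)) (by linarith) hα1.le
    rw [← sub_eq_add_neg] at b2
    have : 0 ≤ (1 + |b| / D * ε) ^ α + (1 - |b| / D * ε) ^ α - 2 := by linarith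
    have h3 : 0 < ε ^ (-α) := Real.rpow_pos_of_pos hε' _
    positivity
  · filter_upwards [self_mem_nhdsWithin, hsmall] with ε hε h1
    have hε' : 0 < ε := hε
    rw [heq ε hε h1]
    have hp : 0 ≤ |b| / D * ε := by positivity
    have hc := chord_bound α hα1 hα2 _ hp h1
    have h3 : 0 < ε ^ (-α) := Real.rpow_pos_of_pos hε' _
    have e : ε ^ (2 - α) = ε ^ 2 * ε ^ (-α) := by
      rw [sub_eq_add_neg, Real.rpow_add hε', Real.rpow_ofNat]
    rw [e]
    calc D ^ α * ((1 + |b| / D * ε) ^ α + (1 - |b| / D * ε) ^ α - 2) * ε ^ (-α)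
        ≤ D ^ α * (((2:ℝ) ^ α - 2) * (|b| / D * ε) ^ 2) * ε ^ (-α) := by
          gcongr; linarith
      _ = _ := by ring

lemma final_ineq (α : ℝ) (hα1 : 1 < α) (hα2 : α < 2) (B D w x c : ℝ) (hB : (2:ℝ) ^ α ≤ B)
    (hD : 0 < D) (hw : 0 < w) (hDx : D = 1 - x ^ 2) (hc : c ^ 2 ≤ 1)
    (hwb : w ^ 2 = D + (x * c) ^ 2) :
    (B - 2 ^ α) * |c| ^ α + ((2:ℝ) ^ α - 2) * D ≤
      w ^ α * B - (w + x * c) ^ α - (w - x * c) ^ α := by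
  obtain ⟨hT, hT', hDD⟩ := half_facts hD hw hwb
  have hw1 : w ≤ 1 := by nlinarith [sq_nonneg x]
  have hcw : |c| ≤ w := by
    apply abs_le_of_sq_le_sq _ hw.le
    rw [hwb, hDx]
    nlinarith [mul_nonneg (show 0 ≤ 1 - c ^ 2 by linarith) (show 0 ≤ 1 - x ^ 2 by linarith)]
  have h1 : |c| ^ α ≤ w ^ α := Real.rpow_le_rpow (abs_nonneg _) hcw (by linarith)
  set y := |x * c| / w with hy
  have hy0 : 0 ≤ y := by positivity
  have hy1 : y ≤ 1 := by
    rw [hy, div_le_one hw]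
    exact abs_le_of_sq_le_sq (by linarith) hw.le
  have hch := chord_bound α hα1 hα2 y hy0 hy1
  have hwα : 0 < w ^ α := Real.rpow_pos_of_pos hw α
  have e1 : (w + x * c) ^ α + (w - x * c) ^ α = w ^ α * ((1 + y) ^ α + (1 - y) ^ α) := by
    have := sym_rpow_abs α w (x * c) 1
    simp only [mul_one] at this
    rw [add_comm, this, show |x * c| = w * y by rw [hy]; field_simp,
      show w - w * y = w * (1 - y) by ring, show w + w * y = w * (1 + y) by ring,
      Real.mul_rpow hw.le (by linarith), Real.mul_rpow hw.le (by linarith)]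
    ring
  have e2 : D = w ^ 2 * (1 - y ^ 2) := by
    rw [hy, div_pow, sq_abs]
    field_simp
    linarith
  have h2 : w ^ 2 ≤ w ^ α := by
    have := Real.rpow_le_rpow_of_exponent_ge hw hw1 hα2.le
    simpa using this
  have h22 : (2:ℝ) ≤ 2 ^ α := by
    have := Real.rpow_le_rpow_of_exponent_le (x := 2) (by norm_num) hα1.le
    simpa using this
  have hy2 : 0 ≤ 1 - y ^ 2 := by nlinarith
  have h3 : ((2:ℝ) ^ α - 2) * D ≤ w ^ α * (((2:ℝ) ^ α - 2) * (1 - y ^ 2)) := by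
    rw [e2]
    have : 0 ≤ ((2:ℝ) ^ α - 2) * (1 - y ^ 2) := mul_nonneg (by linarith) hy2
    nlinarith
  have h4 : w ^ α * ((1 + y) ^ α + (1 - y) ^ α) ≤ w ^ α * (2 + ((2:ℝ) ^ α - 2) * y ^ 2) := by
    gcongr
  have h5 : (B - 2 ^ α) * |c| ^ α ≤ (B - 2 ^ α) * w ^ α := by
    apply mul_le_mul_of_nonneg_left h1; linarith
  linarith

lemma split_integral (α : ℝ) (hα1 : 1 < α) (D w b : ℝ) (ε : ℝ) (hε : 0 < ε)
    (h1 : ε < w - b) (h2 : ε < w + b) :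
    ∫ t in Ioo (-b - w) (-b + w) ∩ {t : ℝ | ε < |t|},
      (D ^ ((α - 1) / 2) - (D - 2 * b * t - t ^ 2) ^ ((α - 1) / 2)) / |t| ^ (1 + α) =
    (∫ t in Ioo ε (w - b),
      (D ^ ((α - 1) / 2) - (D - 2 * b * t - t ^ 2) ^ ((α - 1) / 2)) / |t| ^ (1 + α)) +
    ∫ t in Ioo ε (w - -b),
      (D ^ ((α - 1) / 2) - (D - 2 * (-b) * t - t ^ 2) ^ ((α - 1) / 2)) / |t| ^ (1 + α) := by
  set f : ℝ → ℝ := fun t =>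
    (D ^ ((α - 1) / 2) - (D - 2 * b * t - t ^ 2) ^ ((α - 1) / 2)) / |t| ^ (1 + α) with hf
  have hset : Ioo (-b - w) (-b + w) ∩ {t : ℝ | ε < |t|} =
      Ioo ε (w - b) ∪ Ioo (-b - w) (-ε) := by
    ext t
    simp only [mem_inter_iff, mem_Ioo, mem_ofPred_eq, mem_union, lt_abs]
    constructor
    · rintro ⟨⟨ha, hb⟩, hc | hc⟩
      · left; constructor <;> linarith
      · right; constructor <;> linarith
    · rintro (⟨ha, hb⟩ | ⟨ha, hb⟩)
      · exact ⟨⟨by linarith, by linarith⟩, Or.inl ha⟩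
      · exact ⟨⟨by linarith, by linarith⟩, Or.inr (by linarith)⟩
  have hcont : ∀ t : ℝ, t ≠ 0 → ContinuousAt f t := by
    intro t ht
    apply ContinuousAt.div
    · apply continuousAt_const.sub
      apply ContinuousAt.rpow_const (by fun_prop)
      exact Or.inr (by linarith)
    · exact continuous_abs.continuousAt.rpow_const (Or.inl (abs_ne_zero.mpr ht))
    · exact (Real.rpow_pos_of_pos (abs_pos.mpr ht) _).ne'
  have i1 : IntegrableOn f (Ioo ε (w - b)) := by
    have : ContinuousOn f (Icc ε (w - b)) := fun t ht =>
      (hcont t (hε.trans_le ht.1).ne').continuousWithinAt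
    exact this.integrableOn_Icc.mono_set Ioo_subset_Icc_self
  have i2 : IntegrableOn f (Ioo (-b - w) (-ε)) := by
    have : ContinuousOn f (Icc (-b - w) (-ε)) := fun t ht =>
      (hcont t (by have := ht.2; intro h; linarith)).continuousWithinAt
    exact this.integrableOn_Icc.mono_set Ioo_subset_Icc_self
  have hdisj : Disjoint (Ioo ε (w - b)) (Ioo (-b - w) (-ε)) := by
    rw [Set.disjoint_left]
    intro t ha hb
    linarith [ha.1, hb.2]
  rw [hset, setIntegral_union hdisj measurableSet_Ioo i1 i2]
  congr 1
  rw [← integral_Ioc_eq_integral_Ioo, ← integral_Ioc_eq_integral_Ioo,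
    ← intervalIntegral.integral_of_le (by linarith),
    ← intervalIntegral.integral_of_le (by linarith)]
  have := intervalIntegral.integral_comp_neg f (a := ε) (b := w - -b)
  rw [show -(w - -b) = -b - w by ring] at this
  rw [← this]
  refine intervalIntegral.integral_congr fun t _ => ?_
  simp only [hf, abs_neg]
  rw [show D - 2 * b * -t - (-t) ^ 2 = D - 2 * -b * t - t ^ 2 by ring]

/-- Lower bound for the one-dimensional section integral: the principal value
`g(x,h)` exists and satisfies
`g(x,h) ≥ c₁ |h_n|^α (1-x²)^{-(α+1)/2} + c₂ (1-x²)^{-(α-1)/2}`,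
where `c₁ = (B((α+1)/2,(2-α)/2) - 2^α)/α` and `c₂ = (2^α - 2)/α`. -/
theorem section_integral_lower_bound (n : ℕ) (hn : 2 ≤ n) (α : ℝ) (hα1 : 1 < α)
    (hα2 : α < 2) (x : ℝ) (hx0 : 0 ≤ x) (hx1 : x < 1) (h : EuclideanSpace ℝ (Fin n))
    (hh : h ∈ sphere (0 : EuclideanSpace ℝ (Fin n)) 1)
    (hcoord : ℝ) (hhn : hcoord = h ⟨n - 1, by omega⟩)
    (xx : EuclideanSpace ℝ (Fin n)) (hxx : xx = EuclideanSpace.single ⟨n - 1, by omega⟩ x) :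
    ∃ g : ℝ,
      Tendsto (fun ε : ℝ =>
          ∫ t in Ioo (-x * hcoord - Real.sqrt (x ^ 2 * hcoord ^ 2 - x ^ 2 + 1))
              (-x * hcoord + Real.sqrt (x ^ 2 * hcoord ^ 2 - x ^ 2 + 1)) ∩
              {t : ℝ | ε < |t|},
            ((1 - ‖xx‖ ^ 2) ^ ((α - 1) / 2) - (1 - ‖xx + t • h‖ ^ 2) ^ ((α - 1) / 2)) /
              |t| ^ (1 + α))
        (𝓝[>] (0 : ℝ)) (𝓝 g) ∧
      g ≥ (eulerBeta ((α + 1) / 2) ((2 - α) / 2) - 2 ^ α) / α *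
            |hcoord| ^ α * (1 - x ^ 2) ^ (-((α + 1) / 2)) +
          ((2 : ℝ) ^ α - 2) / α * (1 - x ^ 2) ^ (-((α - 1) / 2)) := by
  set c := hcoord with hc
  have hnorm : ‖h‖ = 1 := by simpa using hh
  have hnx : ‖xx‖ ^ 2 = x ^ 2 := by
    rw [hxx, EuclideanSpace.norm_single, Real.norm_eq_abs, sq_abs]
  have hinner : inner ℝ xx h = x * c := by
    rw [hxx, EuclideanSpace.inner_single_left, hhn]
    simp
  have hc1 : c ^ 2 ≤ 1 := by
    have h1 := PiLp.norm_apply_le h ⟨n - 1, by omega⟩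
    rw [← hhn, hnorm, Real.norm_eq_abs] at h1
    exact (sq_le_one_iff_abs_le_one c).mpr h1
  have hnxt : ∀ t : ℝ, 1 - ‖xx + t • h‖ ^ 2 = (1 - x ^ 2) - 2 * (x * c) * t - t ^ 2 := by
    intro t
    rw [norm_add_sq_real, hnx, inner_smul_right, hinner, norm_smul, hnorm, Real.norm_eq_abs,
      mul_one, sq_abs]
    ring
  simp_rw [hnxt, hnx]
  have hDpos : 0 < 1 - x ^ 2 := by nlinarith
  obtain ⟨D, hD⟩ : ∃ D, D = 1 - x ^ 2 := ⟨_, rfl⟩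
  rw [← hD] at hDpos ⊢
  have harg : x ^ 2 * c ^ 2 - x ^ 2 + 1 = D + (x * c) ^ 2 := by rw [hD]; ring
  rw [harg]
  obtain ⟨w, hwdef⟩ : ∃ w, w = Real.sqrt (D + (x * c) ^ 2) := ⟨_, rfl⟩
  have hw : 0 < w := by rw [hwdef]; exact Real.sqrt_pos.mpr (by positivity)
  have hwb : w ^ 2 = D + (x * c) ^ 2 := by rw [hwdef]; exact Real.sq_sqrt (by positivity)
  rw [← hwdef]
  obtain ⟨hT, hT', hDD⟩ := half_facts hDpos hw hwb
  have l1 := half_limit α hα1 hα2 D w (x * c) hDpos hw hwb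
  have l2 := half_limit α hα1 hα2 D w (-(x * c)) hDpos hw (by rw [hwb]; ring)
  have l3 := (err_limit α hα1 hα2 D (x * c) hDpos).const_mul
    (D ^ (-((α - 1) / 2)) / (α * D))
  have l4 := (l1.add l2).sub l3
  refine ⟨_, l4.congr' ?_, ?_⟩
  · filter_upwards [Ioo_mem_nhdsGT hT, Ioo_mem_nhdsGT hT'] with ε h1 h2
    rw [neg_mul x c, split_integral α hα1 D w (x * c) ε h1.1 h1.2 h2.2]
    rw [show D - -(x * c) * ε = D + (x * c) * ε by ring]
    ring
  · have hfin := final_ineq α hα1 hα2 _ D w x c (two_rpow_le_eulerBeta α hα1 hα2) hDpos hw hD hc1 hwb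
    set B := eulerBeta ((α + 1) / 2) ((2 - α) / 2)
    have hα0 : 0 < α := by linarith
    have e1 : D ^ (-((α + 1) / 2)) = D ^ (-((α - 1) / 2)) / D := by
      rw [show -((α + 1) / 2) = -((α - 1) / 2) - 1 by ring, Real.rpow_sub hDpos, Real.rpow_one]
    rw [e1]
    have hK : 0 < D ^ (-((α - 1) / 2)) := Real.rpow_pos_of_pos hDpos _
    set K := D ^ (-((α - 1) / 2))
    have hm := mul_le_mul_of_nonneg_left hfin (show 0 ≤ K / (α * D) by positivity)
    rw [show w + -(x * c) = w - x * c by ring]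
    calc _ = K / (α * D) * ((B - 2 ^ α) * |c| ^ α + ((2:ℝ) ^ α - 2) * D) := by
          field_simp
      _ ≤ _ := hm
      _ = _ := by ring
end

section
/- Let $1<\alpha<2$ with $\alpha<n$ and $n\geq 2$, let $B\subset\mathbb{R}^n$ be the open unit ball, $w_n(x)=(1-|x|^2)^{(\alpha-1)/2}$, and $2^*=2n/(n-\alpha)$. There exists a constant $c'=c'(\alpha,n)>0$ such that for every continuous function $u$ with compact support in $B$: $\int_B\int_B\left(\frac{u(x)}{w_n(x)}-\frac{u(y)}{w_n(y)}\right)^2\frac{w_n(x)w_n(y)}{|x-y|^{n+\alpha}}\,dx\,dy + \int_B u^2(x)\,dx \;\geq\; c'\left(\int_B|u(x)|^{2^*}\,dx\right)^{2/2^*}$. -/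
open MeasureTheory Metric Set Filter
open scoped ENNReal Topology

/-- Real-variable optimisation step. -/
lemma opt_step (n α C a d s M q : ℝ) (hα : 0 < α) (hαn : α < n) (hq : q = n / (n - α))
    (hC : 0 ≤ C) (ha : 0 ≤ a) (hd : 0 ≤ d) (hs : 0 ≤ s) (hM : 0 < M)
    (h1 : ∀ r : ℝ, 0 < r → r ≤ 1 → a ≤ C * (r ^ α * d + r ^ (α - n) * M))
    (h2 : a ≤ C * (d + s)) :
    a ^ q ≤ (2 * C) ^ q * ((d + s) * M ^ (q - 1)) := by
  have hn : 0 < n := by linarith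
  have hna : 0 < n - α := by linarith
  have hq1 : 1 < q := by rw [hq, lt_div_iff₀ hna]; linarith
  rcases le_or_gt d M with h | h
  · have h3 : a ≤ 2 * C * M := by
      have := h1 1 one_pos le_rfl
      simp only [Real.one_rpow, one_mul] at this
      nlinarith
    rcases ha.eq_or_lt with rfl | ha
    · rw [Real.zero_rpow (by linarith)]; positivity
    have hC' : 0 < 2 * C := by
      by_contra hc
      have : C = 0 := by linarith
      subst this; simp at h3; linarith
    calc a ^ q = a * a ^ (q - 1) := by
          rw [Real.rpow_sub_one ha.ne']; field_simp
      _ ≤ (2 * C * (d + s)) * (2 * C * M) ^ (q - 1) := by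
          gcongr
          nlinarith [mul_nonneg hC (add_nonneg hd hs)]
      _ = _ := by
          rw [Real.mul_rpow hC'.le hM.le, Real.rpow_sub_one hC'.ne']
          have : C ≠ 0 := by rintro rfl; simp at hC'
          field_simp
  · have hdp : 0 < d := hM.trans h
    have h3 := h1 ((M / d) ^ (1 / n)) (by positivity)
      (Real.rpow_le_one (by positivity) (by rw [div_le_one hdp]; exact h.le) (by positivity))
    have e1 : ((M / d) ^ (1 / n)) ^ α * d = M ^ (α / n) * d ^ (1 - α / n) := by
      rw [← Real.rpow_mul (by positivity), Real.div_rpow hM.le hdp.le, Real.rpow_sub hdp,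
        Real.rpow_one, show 1 / n * α = α / n by ring]
      ring
    have e2 : ((M / d) ^ (1 / n)) ^ (α - n) * M = M ^ (α / n) * d ^ (1 - α / n) := by
      rw [← Real.rpow_mul (by positivity), Real.div_rpow hM.le hdp.le,
        show 1 / n * (α - n) = α / n - 1 by field_simp,
        show (1 - α / n) = -(α / n - 1) by ring, Real.rpow_neg hdp.le, Real.rpow_sub_one hM.ne']
      field_simp
    rw [e1, e2] at h3
    have e3 : α / n * q = q - 1 := by rw [hq]; field_simp; ring
    have e4 : (1 - α / n) * q = 1 := by rw [hq]; field_simp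
    calc a ^ q ≤ (2 * C * (M ^ (α / n) * d ^ (1 - α / n))) ^ q := by
          gcongr; linarith
      _ = (2 * C) ^ q * (d * M ^ (q - 1)) := by
          rw [Real.mul_rpow (x := 2 * C) (by positivity) (by positivity),
            Real.mul_rpow (x := M ^ (α / n)) (by positivity) (by positivity), ← Real.rpow_mul hM.le,
            ← Real.rpow_mul hdp.le, e3, e4, Real.rpow_one]
          ring
      _ ≤ _ := by gcongr; linarith

/-- Geometry of the test ball. -/
lemma geom_step {n : ℕ} {x y : EuclideanSpace ℝ (Fin n)} {r : ℝ} (hx : ‖x‖ < 1) (hr : 0 < r)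
    (hr1 : r ≤ 1) (hy : y ∈ ball ((1 - r) • x) (r / 2)) :
    ‖y‖ < 1 ∧ ‖x - y‖ ≤ 2 * r ∧ (1 - ‖x‖ ^ 2) / 4 ≤ 1 - ‖y‖ ^ 2 := by
  rw [mem_ball, dist_eq_norm] at hy
  have hx0 := norm_nonneg x
  have hy0 := norm_nonneg y
  have h1 : ‖y‖ ≤ (1 - r) * ‖x‖ + r / 2 := by
    have : ‖y‖ ≤ ‖(1 - r) • x‖ + ‖y - (1 - r) • x‖ := by
      simpa using norm_add_le ((1 - r) • x) (y - (1 - r) • x)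
    rw [norm_smul, Real.norm_eq_abs, abs_of_nonneg (by linarith : 0 ≤ 1 - r)] at this
    linarith
  have h2 : ‖x - y‖ ≤ r * ‖x‖ + r / 2 := by
    have : ‖x - y‖ ≤ ‖r • x‖ + ‖y - (1 - r) • x‖ := by
      have := norm_sub_le (r • x) (y - (1 - r) • x)
      rwa [show r • x - (y - (1 - r) • x) = x - y by module] at this
    rw [norm_smul, Real.norm_eq_abs, abs_of_pos hr] at this
    linarith
  have h3 : (1 - ‖x‖) / 2 ≤ 1 - ‖y‖ := by nlinarith
  refine ⟨by linarith, by nlinarith, by nlinarith⟩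

lemma w_pos {n : ℕ} {α : ℝ} {x : EuclideanSpace ℝ (Fin n)} (hx : ‖x‖ < 1) : 0 < w n α x := by
  unfold w
  have := norm_nonneg x
  exact Real.rpow_pos_of_pos (by nlinarith) _

lemma w_comp {n : ℕ} {α : ℝ} (hα1 : 1 < α) (hα2 : α < 2) {x y : EuclideanSpace ℝ (Fin n)}
    (hx : ‖x‖ < 1) (h : (1 - ‖x‖ ^ 2) / 4 ≤ 1 - ‖y‖ ^ 2) : w n α x ≤ 2 * w n α y := by
  have hx0 := norm_nonneg x
  have hp : 0 < 1 - ‖x‖ ^ 2 := by nlinarith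
  have h1 : ((1 - ‖x‖ ^ 2) / 4) ^ ((α - 1) / 2) ≤ w n α y :=
    Real.rpow_le_rpow (by positivity) h (by linarith)
  rw [Real.div_rpow hp.le (by norm_num)] at h1
  have h2 : (4 : ℝ) ^ ((α - 1) / 2) ≤ 2 := by
    calc (4 : ℝ) ^ ((α - 1) / 2) ≤ 4 ^ (1 / 2 : ℝ) :=
          Real.rpow_le_rpow_of_exponent_le (by norm_num) (by linarith)
      _ = 2 := by
          rw [← Real.sqrt_eq_rpow, show (4 : ℝ) = 2 ^ 2 by norm_num]; simp
  have h4 : (0 : ℝ) < 4 ^ ((α - 1) / 2) := by positivity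
  have h5 : w n α x ≤ w n α y * 4 ^ ((α - 1) / 2) := (div_le_iff₀ h4).1 h1
  have h6 : 0 ≤ w n α y := by
    refine le_trans ?_ h1
    positivity
  nlinarith

lemma point_step {n : ℕ} {α : ℝ} (hα1 : 1 < α) (hα2 : α < 2) (u : EuclideanSpace ℝ (Fin n) → ℝ)
    {x y : EuclideanSpace ℝ (Fin n)} {r : ℝ} (hx : ‖x‖ < 1) (hr : 0 < r)
    (hr1 : r ≤ 1) (hy : y ∈ ball ((1 - r) • x) (r / 2)) :
    u x ^ 2 ≤ 4 * (2 * r) ^ ((n : ℝ) + α) * ((u x / w n α x - u y / w n α y) ^ 2 *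
              (w n α x * w n α y) / ‖x - y‖ ^ ((n : ℝ) + α)) + 8 * u y ^ 2 := by
  obtain ⟨hy1, hxy, hg⟩ := geom_step hx hr hr1 hy
  have hwx := w_pos (α := α) hx
  have hwy := w_pos (α := α) hy1
  have hc := w_comp hα1 hα2 hx hg
  by_cases hne : x = y
  · subst hne; simp; nlinarith [sq_nonneg (u x)]
  have hpos : 0 < ‖x - y‖ := norm_pos_iff.2 (sub_ne_zero.2 hne)
  set W := w n α x
  set Z := w n α y
  have hP : 0 < ‖x - y‖ ^ ((n : ℝ) + α) := by positivity
  have hle : ‖x - y‖ ^ ((n : ℝ) + α) ≤ (2 * r) ^ ((n : ℝ) + α) :=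
    Real.rpow_le_rpow hpos.le hxy (by positivity)
  have h1 : 4 * ((u x / W - u y / Z) ^ 2 * (W * Z)) ≤ 4 * (2 * r) ^ ((n : ℝ) + α) *
      ((u x / W - u y / Z) ^ 2 * (W * Z) / ‖x - y‖ ^ ((n : ℝ) + α)) := by
    have : 0 ≤ (u x / W - u y / Z) ^ 2 * (W * Z) := by positivity
    have h2 := le_mul_of_one_le_right this ((one_le_div hP).2 hle)
    calc _ ≤ 4 * ((u x / W - u y / Z) ^ 2 * (W * Z) *
          ((2 * r) ^ ((n : ℝ) + α) / ‖x - y‖ ^ ((n : ℝ) + α))) := by linarith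
      _ = _ := by ring
  refine le_trans ?_ (add_le_add_left h1 _)
  set a := u x / W with ha
  set b := u y / Z with hb
  have hux : u x = a * W := by rw [ha]; field_simp
  have huy : u y = b * Z := by rw [hb]; field_simp
  rw [hux, huy]
  have k1 : a ^ 2 ≤ 2 * (a - b) ^ 2 + 2 * b ^ 2 := by nlinarith [sq_nonneg (a - 2 * b)]
  have k2 : W ^ 2 ≤ 2 * (W * Z) := by nlinarith
  have k3 : W ^ 2 ≤ 4 * Z ^ 2 := by nlinarith
  calc (a * W) ^ 2 = a ^ 2 * W ^ 2 := by ring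
    _ ≤ (2 * (a - b) ^ 2 + 2 * b ^ 2) * W ^ 2 := by gcongr
    _ = 2 * (a - b) ^ 2 * W ^ 2 + 2 * b ^ 2 * W ^ 2 := by ring
    _ ≤ 2 * (a - b) ^ 2 * (2 * (W * Z)) + 2 * b ^ 2 * (4 * Z ^ 2) := by gcongr
    _ = _ := by ring

/-- Hölder on a set. -/
lemma holder_step {E : Type*} [MeasurableSpace E] (μ : Measure E) (A : Set E) (u : E → ℝ)
    (hu : Measurable u) (q : ℝ) (hq : 1 < q) :
    ∫⁻ y in A, ENNReal.ofReal (u y ^ 2) ∂μ ≤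
      (∫⁻ y in A, ENNReal.ofReal (|u y| ^ (2 * q)) ∂μ) ^ (1 / q) * (μ A) ^ (1 - 1 / q) := by
  have hc : q.HolderConjugate (q / (q - 1)) := Real.HolderConjugate.conjExponent hq
  have := ENNReal.lintegral_mul_le_Lp_mul_Lq (μ.restrict A) hc
    (f := fun y => ENNReal.ofReal (u y ^ 2)) (g := fun _ => 1) (by fun_prop) (by fun_prop)
  simp only [Pi.mul_apply, mul_one, ENNReal.one_rpow, lintegral_const, one_mul,
    Measure.restrict_apply_univ] at this
  refine this.trans (le_of_eq ?_)
  congr 1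
  · congr 1
    refine lintegral_congr fun y => ?_
    rw [ENNReal.ofReal_rpow_of_nonneg (sq_nonneg _) (by linarith), Real.rpow_mul (abs_nonneg _)]
    simp
  · congr 1
    have : q - 1 ≠ 0 := by linarith
    field_simp

/-- Averaging over the test ball. -/
lemma avg_step {n : ℕ} {α : ℝ} (hα1 : 1 < α) (hα2 : α < 2)
    (u : EuclideanSpace ℝ (Fin n) → ℝ) (hu : Measurable u)
    {x : EuclideanSpace ℝ (Fin n)} {r : ℝ} (hx : ‖x‖ < 1) (hr : 0 < r) (hr1 : r ≤ 1) :
    ENNReal.ofReal ((r / 2) ^ n) * volume (ball (0 : EuclideanSpace ℝ (Fin n)) 1)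
        * ENNReal.ofReal (u x ^ 2) ≤
      ENNReal.ofReal (4 * (2 * r) ^ ((n : ℝ) + α)) *
        (∫⁻ y in ball (0 : EuclideanSpace ℝ (Fin n)) 1,
            ENNReal.ofReal ((u x / w n α x - u y / w n α y) ^ 2 *
              (w n α x * w n α y) / ‖x - y‖ ^ ((n : ℝ) + α))) +
      ENNReal.ofReal 8 * ∫⁻ y in ball ((1 - r) • x) (r / 2), ENNReal.ofReal (u y ^ 2) := by
  have hsub : ball ((1 - r) • x) (r / 2) ⊆ ball (0 : EuclideanSpace ℝ (Fin n)) 1 := fun y hy => by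
    simpa using (geom_step hx hr hr1 hy).1
  have hvol : volume (ball ((1 - r) • x) (r / 2)) = ENNReal.ofReal ((r / 2) ^ n) *
      volume (ball (0 : EuclideanSpace ℝ (Fin n)) 1) := by
    have := Measure.addHaar_ball_of_pos (volume : Measure (EuclideanSpace ℝ (Fin n)))
      ((1 - r) • x) (half_pos hr)
    simpa using this
  rw [← hvol]
  calc volume (ball ((1 - r) • x) (r / 2)) * ENNReal.ofReal (u x ^ 2)
      = ∫⁻ _ in ball ((1 - r) • x) (r / 2), ENNReal.ofReal (u x ^ 2) := by
        rw [setLIntegral_const, mul_comm]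
    _ ≤ ∫⁻ y in ball ((1 - r) • x) (r / 2),
          (ENNReal.ofReal (4 * (2 * r) ^ ((n : ℝ) + α)) *
            ENNReal.ofReal ((u x / w n α x - u y / w n α y) ^ 2 *
              (w n α x * w n α y) / ‖x - y‖ ^ ((n : ℝ) + α)) +
            ENNReal.ofReal 8 * ENNReal.ofReal (u y ^ 2)) := by
        refine setLIntegral_mono' measurableSet_ball fun y hy => ?_
        rw [← ENNReal.ofReal_mul (by positivity), ← ENNReal.ofReal_mul (by positivity)]
        refine le_trans (ENNReal.ofReal_le_ofReal (point_step hα1 hα2 u hx hr hr1 hy))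
          ENNReal.ofReal_add_le
    _ = ENNReal.ofReal (4 * (2 * r) ^ ((n : ℝ) + α)) *
          (∫⁻ y in ball ((1 - r) • x) (r / 2),
            ENNReal.ofReal ((u x / w n α x - u y / w n α y) ^ 2 *
              (w n α x * w n α y) / ‖x - y‖ ^ ((n : ℝ) + α))) +
          ENNReal.ofReal 8 * ∫⁻ y in ball ((1 - r) • x) (r / 2), ENNReal.ofReal (u y ^ 2) := by
        rw [lintegral_add_right _ (by fun_prop), lintegral_const_mul' _ _ ENNReal.ofReal_ne_top,
          lintegral_const_mul' _ _ ENNReal.ofReal_ne_top]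
    _ ≤ _ := by
        gcongr

/-- The two real estimates, from the averaged one. -/
lemma real_step {n : ℕ} {α β a d s M q : ℝ} (hα : 0 < α) (hn : 0 < n)
    (hαn : α < n) (hq : q = n / (n - α)) (hβ : 0 < β) (hd : 0 ≤ d) (hs : 0 ≤ s) (hM : 0 < M)
    (h : ∀ r : ℝ, 0 < r → r ≤ 1 → ∃ T : ℝ, T ≤ s ∧ T ≤ M * ((r / 2) ^ n * β) ^ (1 - 1 / q) ∧
      (r / 2) ^ n * β * a ≤ 4 * (2 * r) ^ ((n : ℝ) + α) * d + 8 * T) :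
    (∀ r : ℝ, 0 < r → r ≤ 1 → a ≤ (2 ^ n / β * (4 * 2 ^ ((n : ℝ) + α) + 8 * (1 + β ^ (α / n)))) *
      (r ^ α * d + r ^ (α - n) * M)) ∧
    a ≤ (2 ^ n / β * (4 * 2 ^ ((n : ℝ) + α) + 8 * (1 + β ^ (α / n)))) * (d + s) := by
  have hnR : (0 : ℝ) < n := by exact_mod_cast hn
  have hna : 0 < (n : ℝ) - α := by linarith
  have he : 1 - 1 / q = α / n := by rw [hq]; field_simp; ring
  have hP : (0 : ℝ) < 2 ^ ((n : ℝ) + α) := by positivity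
  have hQ : (0 : ℝ) < β ^ (α / n) := by positivity
  constructor
  · intro r hr hr1
    obtain ⟨T, -, hT, h⟩ := h r hr hr1
    have e1 : ((r / 2) ^ n * β) ^ (1 - 1 / q) ≤ r ^ α * β ^ (α / n) := by
      rw [he, Real.mul_rpow (by positivity) hβ.le, ← Real.rpow_natCast,
        ← Real.rpow_mul (by positivity), show (n : ℝ) * (α / n) = α by field_simp]
      gcongr
      linarith
    have e2 : (2 * r) ^ ((n : ℝ) + α) = 2 ^ ((n : ℝ) + α) * (r ^ n * r ^ α) := by
      rw [Real.mul_rpow (by norm_num) hr.le, Real.rpow_add hr, Real.rpow_natCast]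
    have e3 : r ^ (α - n) = r ^ α / r ^ n := by
      rw [Real.rpow_sub hr, Real.rpow_natCast]
    have h2 : T ≤ r ^ α * β ^ (α / n) * M := by
      refine hT.trans ?_
      rw [mul_comm M]; gcongr
    have hrn : (0 : ℝ) < r ^ n := by positivity
    have hra : (0 : ℝ) < r ^ α := by positivity
    have h3 : a ≤ 2 ^ n / β * (4 * 2 ^ ((n : ℝ) + α) * (r ^ α * d) +
        8 * β ^ (α / n) * (r ^ (α - n) * M)) := by
      have : a = 2 ^ n / β / r ^ n * ((r / 2) ^ n * β * a) := by
        rw [div_pow]; field_simp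
      rw [this]
      calc _ ≤ 2 ^ n / β / r ^ n * (4 * (2 * r) ^ ((n : ℝ) + α) * d +
            8 * (r ^ α * β ^ (α / n) * M)) := by
            gcongr; linarith
        _ = _ := by rw [e2, e3]; field_simp
    refine h3.trans ?_
    rw [mul_assoc (2 ^ n / β)]
    gcongr
    have k1 : 0 ≤ r ^ α * d := by positivity
    have k2 : 0 ≤ r ^ (α - n) * M := by positivity
    nlinarith [mul_nonneg hP.le k2, mul_nonneg hQ.le k1]
  · obtain ⟨T, hT, -, h⟩ := h 1 one_pos le_rfl
    have h3 : a ≤ 2 ^ n / β * (4 * 2 ^ ((n : ℝ) + α) * d + 8 * s) := by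
      have : a = 2 ^ n / β * ((1 / 2) ^ n * β * a) := by
        rw [div_pow, one_pow]; field_simp
      rw [this]
      gcongr
      rw [mul_one] at h
      linarith
    refine h3.trans ?_
    rw [mul_assoc (2 ^ n / β)]
    gcongr
    nlinarith [mul_nonneg hP.le hs, mul_nonneg hQ.le hs, mul_nonneg hQ.le hd]

set_option maxHeartbeats 2000000 in
/-- Weighted Sobolev inequality on the unit ball:
`∫_B∫_B (u(x)/w_n(x) - u(y)/w_n(y))² w_n(x)w_n(y)/|x-y|^{n+α} dx dy + ∫_B u²
  ≥ c' (∫_B |u|^{2*})^{2/2*}` with `2* = 2n/(n-α)`. -/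
theorem weighted_sobolev_ball (n : ℕ) (hn : 2 ≤ n) (α : ℝ) (hα1 : 1 < α)
    (hα2 : α < 2) (hαn : α < n) :
    ∃ c' : ℝ, 0 < c' ∧ ∀ u : EuclideanSpace ℝ (Fin n) → ℝ,
      Continuous u → HasCompactSupport u →
      tsupport u ⊆ ball (0 : EuclideanSpace ℝ (Fin n)) 1 →
      (∫⁻ x in ball (0 : EuclideanSpace ℝ (Fin n)) 1,
          ∫⁻ y in ball (0 : EuclideanSpace ℝ (Fin n)) 1,
            ENNReal.ofReal ((u x / w n α x - u y / w n α y) ^ 2 *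
              (w n α x * w n α y) / ‖x - y‖ ^ ((n : ℝ) + α))) +
        ENNReal.ofReal (∫ x in ball (0 : EuclideanSpace ℝ (Fin n)) 1, (u x) ^ 2) ≥
      ENNReal.ofReal (c' *
        (∫ x in ball (0 : EuclideanSpace ℝ (Fin n)) 1,
          |u x| ^ ((2 * n) / ((n : ℝ) - α))) ^ (2 / ((2 * n) / ((n : ℝ) - α)))) := by
  have hn0 : 0 < n := by omega
  have hnR : (0 : ℝ) < n := by exact_mod_cast hn0
  have hna : 0 < (n : ℝ) - α := by linarith
  set B := ball (0 : EuclideanSpace ℝ (Fin n)) 1 with hB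
  have hvB : volume B ≠ ⊤ := measure_ball_lt_top.ne
  set β := (volume B).toReal with hβd
  have hβ : 0 < β := ENNReal.toReal_pos (measure_ball_pos _ _ one_pos).ne' hvB
  have hvβ : volume B = ENNReal.ofReal β := (ENNReal.ofReal_toReal hvB).symm
  set q : ℝ := n / ((n : ℝ) - α) with hq
  have hq1 : 1 < q := by rw [hq, lt_div_iff₀ hna]; linarith
  have hp : (2 * n) / ((n : ℝ) - α) = 2 * q := by rw [hq]; ring
  have hp2 : 2 / (2 * q) = 1 / q := by field_simp
  rw [hp, hp2]
  set C : ℝ := 2 ^ n / β * (4 * 2 ^ ((n : ℝ) + α) + 8 * (1 + β ^ (α / n))) with hC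
  have hCpos : 0 < C := by positivity
  set K : ℝ := (2 * C) ^ q with hK
  have hKpos : 0 < K := by positivity
  refine ⟨1 / (K * (1 + β)), by positivity, fun u hu hcs hsupp => ?_⟩
  have hum : Measurable u := hu.measurable
  have hint2 : Integrable (fun x => u x ^ 2) volume := by
    have hc : Continuous fun x => u x ^ 2 := by fun_prop
    have hk : HasCompactSupport fun x => u x ^ 2 :=
      hcs.comp_left (g := fun t : ℝ => t ^ 2) (by simp)
    exact hc.integrable_of_hasCompactSupport hk
  have hintp : Integrable (fun x => |u x| ^ (2 * q)) volume := by
    have hc : Continuous fun x => |u x| ^ (2 * q) :=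
      hu.abs.rpow_const (fun x => Or.inr (by linarith))
    have hk : HasCompactSupport fun x => |u x| ^ (2 * q) :=
      hcs.comp_left (g := fun t : ℝ => |t| ^ (2 * q))
        (by simp only [abs_zero]; exact Real.zero_rpow (by linarith))
    exact hc.integrable_of_hasCompactSupport hk
  set s := ∫ x in B, u x ^ 2 with hs
  have hs0 : 0 ≤ s := integral_nonneg fun x => sq_nonneg _
  have hsl : ∫⁻ x in B, ENNReal.ofReal (u x ^ 2) = ENNReal.ofReal s :=
    (ofReal_integral_eq_lintegral_ofReal hint2.restrict
      (Eventually.of_forall fun x => sq_nonneg _)).symm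
  set I := ∫ x in B, |u x| ^ (2 * q) with hI
  have hI0 : 0 ≤ I := integral_nonneg fun x => by positivity
  have hIl : ∫⁻ x in B, ENNReal.ofReal (|u x| ^ (2 * q)) = ENNReal.ofReal I :=
    (ofReal_integral_eq_lintegral_ofReal hintp.restrict
      (Eventually.of_forall fun x => by positivity)).symm
  rcases hI0.eq_or_lt with hz | hIpos
  · rw [← hz, Real.zero_rpow (by positivity)]; simp
  set M := I ^ (1 / q) with hM
  have hMpos : 0 < M := by positivity
  have hMq : I = M * M ^ (q - 1) := by
    have : M ^ q = I := by
      rw [hM, ← Real.rpow_mul hI0, one_div_mul_cancel (by linarith), Real.rpow_one]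
    rw [Real.rpow_sub_one hMpos.ne', this]; field_simp
  set D : EuclideanSpace ℝ (Fin n) → ℝ≥0∞ := fun x => ∫⁻ y in B,
            ENNReal.ofReal ((u x / w n α x - u y / w n α y) ^ 2 *
              (w n α x * w n α y) / ‖x - y‖ ^ ((n : ℝ) + α)) with hD
  change ENNReal.ofReal (1 / (K * (1 + β)) * M) ≤ (∫⁻ x in B, D x) + ENNReal.ofReal s
  have key : ∀ x ∈ B, ENNReal.ofReal (|u x| ^ (2 * q)) ≤
      ENNReal.ofReal (K * M ^ (q - 1)) * (D x + ENNReal.ofReal s) := by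
    intro x hxB
    have hx : ‖x‖ < 1 := by simpa [hB] using hxB
    have hKM : 0 < K * M ^ (q - 1) := by positivity
    by_cases hDx : D x = ⊤
    · rw [hDx, top_add, ENNReal.mul_top (by simpa using hKM)]; exact le_top
    set d := (D x).toReal with hd
    have hd0 : 0 ≤ d := ENNReal.toReal_nonneg
    have hDd : D x = ENNReal.ofReal d := (ENNReal.ofReal_toReal hDx).symm
    have hreal := real_step (n := n) (α := α) (β := β) (a := u x ^ 2) (d := d) (s := s) (M := M)
      (q := q) (by linarith) hn0 hαn hq hβ hd0 hs0 hMpos ?_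
    · have hopt := opt_step n α C (u x ^ 2) d s M q (by linarith) hαn hq hCpos.le (sq_nonneg _)
        hd0 hs0 hMpos hreal.1 hreal.2
      rw [hDd, ← ENNReal.ofReal_add hd0 hs0, ← ENNReal.ofReal_mul hKM.le]
      apply ENNReal.ofReal_le_ofReal
      rw [Real.rpow_mul (abs_nonneg _), Real.rpow_two, sq_abs]
      linarith
    · intro r hr hr1
      have hsub : ball ((1 - r) • x) (r / 2) ⊆ B := fun y hy => by
        simpa [hB] using (geom_step hx hr hr1 hy).1
      have hvol : volume (ball ((1 - r) • x) (r / 2)) = ENNReal.ofReal ((r / 2) ^ n * β) := by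
        have := Measure.addHaar_ball_of_pos (volume : Measure (EuclideanSpace ℝ (Fin n)))
          ((1 - r) • x) (half_pos hr)
        rw [ENNReal.ofReal_mul (by positivity), ← hvβ]
        simpa using this
      have havg := avg_step hα1 hα2 u hum hx hr hr1
      change _ * volume B * _ ≤ _ * D x + _ at havg
      set L := ∫⁻ y in ball ((1 - r) • x) (r / 2), ENNReal.ofReal (u y ^ 2) with hL
      have hLs : L ≤ ENNReal.ofReal s := by
        rw [← hsl]; exact lintegral_mono_set hsub
      have hLtop : L ≠ ⊤ := ne_top_of_le_ne_top ENNReal.ofReal_ne_top hLs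
      have hLM : L ≤ ENNReal.ofReal (M * ((r / 2) ^ n * β) ^ (1 - 1 / q)) := by
        have hee : 0 ≤ 1 - 1 / q := by
          rw [sub_nonneg, div_le_one (by linarith)]; exact hq1.le
        refine (holder_step volume _ u hum q hq1).trans ?_
        rw [hvol, ENNReal.ofReal_mul hMpos.le, hM, ← ENNReal.ofReal_rpow_of_nonneg hI0 (by positivity),
          ENNReal.ofReal_rpow_of_nonneg (by positivity) hee, ← hIl]
        gcongr
      refine ⟨L.toReal, ENNReal.toReal_le_of_le_ofReal hs0 hLs,
        ENNReal.toReal_le_of_le_ofReal (by positivity) hLM, ?_⟩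
      have hLr : L = ENNReal.ofReal L.toReal := (ENNReal.ofReal_toReal hLtop).symm
      have hL0 : 0 ≤ L.toReal := ENNReal.toReal_nonneg
      rw [hLr, hDd, hvβ, ← ENNReal.ofReal_mul (by positivity), ← ENNReal.ofReal_mul (by positivity),
        ← ENNReal.ofReal_mul (by positivity), ← ENNReal.ofReal_mul (by positivity),
        ← ENNReal.ofReal_add (by positivity) (by positivity),
        ENNReal.ofReal_le_ofReal_iff (by positivity)] at havg
      exact havg
  have hfin : ENNReal.ofReal I ≤ ENNReal.ofReal (K * M ^ (q - 1)) *
      ((∫⁻ x in B, D x) + ENNReal.ofReal s * ENNReal.ofReal β) := by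
    rw [← hIl]
    refine (setLIntegral_mono' measurableSet_ball key).trans (le_of_eq ?_)
    rw [lintegral_const_mul' _ _ ENNReal.ofReal_ne_top, lintegral_add_right _ measurable_const,
      setLIntegral_const, hvβ]
  by_cases hE : (∫⁻ x in B, D x) = ⊤
  · rw [hE, top_add]; exact le_top
  set e := (∫⁻ x in B, D x).toReal with he
  have he0 : 0 ≤ e := ENNReal.toReal_nonneg
  have hEe : (∫⁻ x in B, D x) = ENNReal.ofReal e := (ENNReal.ofReal_toReal hE).symm
  rw [hEe] at hfin ⊢
  rw [← ENNReal.ofReal_mul hs0, ← ENNReal.ofReal_add he0 (by positivity),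
    ← ENNReal.ofReal_mul (by positivity), ENNReal.ofReal_le_ofReal_iff (by positivity)] at hfin
  rw [← ENNReal.ofReal_add he0 hs0]
  apply ENNReal.ofReal_le_ofReal
  have hMq1 : 0 < M ^ (q - 1) := by positivity
  have h1 : M ≤ K * (e + s * β) := by
    rw [hMq] at hfin
    refine le_of_mul_le_mul_right ?_ hMq1
    linarith
  rw [one_div_mul_eq_div, div_le_iff₀ (by positivity)]
  refine h1.trans ?_
  have : K * (e + s * β) ≤ K * ((e + s) * (1 + β)) := by
    gcongr
    nlinarith [mul_nonneg he0 hβ.le]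
  linarith
end
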